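/- arXiv:1707.02002 — 2 statements merged into one kernel-verified Lean document; each statement's English description precedes it below -/
import Mathlib

section
/- Let G be an n-vertex unicyclic graph with unique cycle C_l and branches T_1,…,T_l. Then the additive degree-Kirchhoff index satisfies Kf⁺(G) = 4·Kf(G) + 2·Σ_{i=1}^{l} D_{T_i}(v_i) − n(n−l). -/
open SimpleGraph Finset

attribute [local instance] Classical.propDecidable

variable {V : Type*}

/-- Degree of a vertex as a real number. -/
noncomputable def degR [Fintype V] (G : SimpleGraph V) (x : V) : ℝ :=
  ((Finset.univ.filter fun y => G.Adj x y).card : ℝ)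

/-- Number of edges of a graph. -/
noncomputable def esize (G : SimpleGraph V) : ℕ := Nat.card G.edgeSet

/-- Dirichlet energy of a potential. -/
noncomputable def energyFn [Fintype V] (G : SimpleGraph V) (φ : V → ℝ) : ℝ :=
  (1/2) * ∑ u, ∑ v, if G.Adj u v then (φ u - φ v)^2 else 0

/-- Effective resistance between two vertices (unit resistors on edges),
via the Dirichlet variational principle: the reciprocal of the minimal energy
of a potential with value 1 at `x` and 0 at `y`. -/
noncomputable def eres [Fintype V] (G : SimpleGraph V) (x y : V) : ℝ :=
  (sInf {e : ℝ | ∃ φ : V → ℝ, φ x = 1 ∧ φ y = 0 ∧ e = energyFn G φ})⁻¹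

/-- The transition matrix of the simple random walk, killed at `y`. -/
noncomputable def hitMat [Fintype V] (G : SimpleGraph V) (y : V) : Matrix V V ℝ :=
  Matrix.of fun u v => if v = y then 0 else if G.Adj u v then (degR G u)⁻¹ else 0

/-- Expected hitting time `H_{xy}` of the simple random walk from `x` to `y`,
expressed as the sum of the survival probabilities of the walk killed at `y`. -/
noncomputable def hitting [Fintype V] (G : SimpleGraph V) (x y : V) : ℝ :=
  if x = y then 0 else ∑' k : ℕ, ∑ z, (hitMat G y ^ k) x z

/-- Resistance-centrality `R(x)`. -/
noncomputable def Rres [Fintype V] (G : SimpleGraph V) (x : V) : ℝ := ∑ y, eres G x y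

/-- Weighted resistance-centrality `R^w(x)`. -/
noncomputable def Rw [Fintype V] (G : SimpleGraph V) (x : V) : ℝ :=
  ∑ y, degR G y * eres G x y

/-- Kirchhoff index `Kf(G)`. -/
noncomputable def Kf [Fintype V] (G : SimpleGraph V) : ℝ :=
  (1/2) * ∑ x, ∑ y, eres G x y

/-- Additive degree-Kirchhoff index `Kf⁺(G)`. -/
noncomputable def KfPlus [Fintype V] (G : SimpleGraph V) : ℝ :=
  (1/2) * ∑ x, ∑ y, (degR G x + degR G y) * eres G x y

/-- Multiplicative degree-Kirchhoff index `Kf*(G)`. -/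
noncomputable def KfStar [Fintype V] (G : SimpleGraph V) : ℝ :=
  (1/2) * ∑ x, ∑ y, degR G x * degR G y * eres G x y

/-- Cover cost `CC(x) = Σ_y H_{xy}`. -/
noncomputable def coverCost [Fintype V] (G : SimpleGraph V) (x : V) : ℝ :=
  ∑ y, hitting G x y

/-- Reverse cover cost `RC(x) = Σ_y H_{yx}`. -/
noncomputable def reverseCoverCost [Fintype V] (G : SimpleGraph V) (x : V) : ℝ :=
  ∑ y, hitting G y x

/-- Centrality (transmission) `D(x) = Σ_y d(x,y)`. -/
noncomputable def Dcent [Fintype V] (G : SimpleGraph V) (x : V) : ℝ :=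
  ∑ y, (G.dist x y : ℝ)

/-- Weighted centrality `D^w(x) = Σ_y deg(y)·d(x,y)`. -/
noncomputable def Dw [Fintype V] (G : SimpleGraph V) (x : V) : ℝ :=
  ∑ y, degR G y * (G.dist x y : ℝ)

/-- Wiener index `W(G)`. -/
noncomputable def Wiener [Fintype V] (G : SimpleGraph V) : ℝ :=
  (1/2) * ∑ x, ∑ y, (G.dist x y : ℝ)

/-- `D_{T}(v)`: sum of distances from `v` to the vertices of its connected
component in `G'` (used for the branch trees of a unicyclic graph). -/
noncomputable def branchD [Fintype V] (G' : SimpleGraph V) (v : V) : ℝ :=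
  ∑ u, if G'.Reachable v u then (G'.dist v u : ℝ) else 0

/-- The set of edges of the cycle `c 0 - c 1 - ⋯ - c (l-1) - c 0`. -/
def cycleEdges {l : ℕ} [NeZero l] (c : Fin l → V) : Set (Sym2 V) :=
  Set.range fun i : Fin l => s(c i, c (i + 1))

/-- Distance from a vertex to a set of vertices. -/
noncomputable def distToSet [Fintype V] (G : SimpleGraph V) (x : V) (s : Set V) : ℕ :=
  sInf {d | ∃ y ∈ s, G.dist x y = d}

/-- `v` is the center of a star. -/
def IsStarCenter (G : SimpleGraph V) (v : V) : Prop := ∀ u, u ≠ v → G.Adj v u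

/-- `G` is a star. -/
def IsStar (G : SimpleGraph V) : Prop := ∃ v, IsStarCenter G v

/-- The lollipop graph `P_n^l` : a cycle `C_l` on `0,…,l-1` together with a
path on `l,…,n-1` attached at the cycle vertex `0`. -/
def lollipop (n l : ℕ) : SimpleGraph (Fin n) :=
  SimpleGraph.fromRel (fun a b =>
    (a.val + 1 = b.val ∧ b.val < l) ∨ (a.val = 0 ∧ b.val = l - 1) ∨
    (a.val = 0 ∧ b.val = l) ∨ (l ≤ a.val ∧ a.val + 1 = b.val))

/-- The graph `S_n^l` : a cycle `C_l` on `0,…,l-1` with `n - l` pendant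
vertices `l,…,n-1` attached at the cycle vertex `0`. -/
def starCycle (n l : ℕ) : SimpleGraph (Fin n) :=
  SimpleGraph.fromRel (fun a b =>
    (a.val + 1 = b.val ∧ b.val < l) ∨ (a.val = 0 ∧ b.val = l - 1) ∨
    (a.val = 0 ∧ l ≤ b.val))

/-- The cycle graph `C_n` on `Fin n`. -/
def cycleG (n : ℕ) : SimpleGraph (Fin n) :=
  SimpleGraph.fromRel (fun a b => a.val + 1 = b.val ∨ (a.val = 0 ∧ b.val = n - 1))


section helpers

variable [Fintype V]

lemma le_of_sq_le_sq' {a b : ℝ} (h : a^2 ≤ b^2) (hb : 0 ≤ b) : a ≤ b :=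
  le_trans (le_abs_self a) (abs_le_of_sq_le_sq h hb)

lemma energyFn_nonneg (G : SimpleGraph V) (φ : V → ℝ) : 0 ≤ energyFn G φ := by
  unfold energyFn
  refine mul_nonneg (by norm_num) (Finset.sum_nonneg fun a _ => Finset.sum_nonneg fun b _ => ?_)
  split_ifs <;> positivity

lemma adj_sq_le_energy (G : SimpleGraph V) (φ : V → ℝ) {u v : V} (h : G.Adj u v) :
    (φ u - φ v)^2 ≤ 2 * energyFn G φ := by
  unfold energyFn
  have h0 : ∀ a b, 0 ≤ (if G.Adj a b then (φ a - φ b)^2 else 0) := by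
    intro a b; split_ifs <;> positivity
  have h1 : (if G.Adj u v then (φ u - φ v)^2 else 0) ≤
      ∑ b, if G.Adj u b then (φ u - φ b)^2 else 0 :=
    Finset.single_le_sum (f := fun b => if G.Adj u b then (φ u - φ b)^2 else 0)
      (fun b _ => h0 u b) (Finset.mem_univ v)
  have h2 : (∑ b, if G.Adj u b then (φ u - φ b)^2 else 0) ≤
      ∑ a, ∑ b, if G.Adj a b then (φ a - φ b)^2 else 0 :=
    Finset.single_le_sum (f := fun a => ∑ b, if G.Adj a b then (φ a - φ b)^2 else 0)
      (fun a _ => Finset.sum_nonneg fun b _ => h0 a b) (Finset.mem_univ u)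
  rw [if_pos h] at h1
  linarith

lemma walk_le_energy (G : SimpleGraph V) (φ : V → ℝ) {u v : V} (w : G.Walk u v) :
    |φ u - φ v| ≤ w.length * Real.sqrt (2 * energyFn G φ) := by
  induction w with
  | nil => simp
  | @cons a b d h w ih =>
    have h1 : |φ a - φ b| ≤ Real.sqrt (2 * energyFn G φ) :=
      Real.abs_le_sqrt (adj_sq_le_energy G φ h)
    have h2 := abs_sub_le (φ a) (φ b) (φ d)
    simp only [SimpleGraph.Walk.length_cons]
    push_cast
    linarith

lemma energyFn_affine (G : SimpleGraph V) (φ : V → ℝ) (k m : ℝ) :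
    energyFn G (fun a => k * φ a + m) = k^2 * energyFn G φ := by
  unfold energyFn
  simp only [Finset.mul_sum]
  refine Finset.sum_congr rfl fun a _ => Finset.sum_congr rfl fun b _ => ?_
  split_ifs <;> ring

def resBound (G : SimpleGraph V) (x y : V) (R : ℝ) : Prop :=
  0 ≤ R ∧ ∀ φ : V → ℝ, (φ x - φ y)^2 ≤ R * energyFn G φ

lemma exists_resBound (G : SimpleGraph V) (hG : G.Connected) (x y : V) :
    ∃ R, 0 < R ∧ resBound G x y R := by
  obtain ⟨w⟩ := hG.preconnected x y
  refine ⟨2 * (w.length)^2 + 1, by positivity, by positivity, fun φ => ?_⟩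
  have h := walk_le_energy G φ w
  have h0 := energyFn_nonneg G φ
  have h1 : |φ x - φ y|^2 ≤ (w.length * Real.sqrt (2 * energyFn G φ))^2 := by
    gcongr
  rw [sq_abs, mul_pow, Real.sq_sqrt (by linarith)] at h1
  nlinarith

lemma eres_isLeast (G : SimpleGraph V) (hG : G.Connected) (x y : V) :
    IsLeast {R | resBound G x y R} (eres G x y) := by
  by_cases hxy : x = y
  · subst hxy
    have : eres G x x = 0 := by
      unfold eres
      have : {e : ℝ | ∃ φ : V → ℝ, φ x = 1 ∧ φ x = 0 ∧ e = energyFn G φ} = ∅ := by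
        ext e
        simp only [Set.mem_ofPred_eq, Set.mem_empty_iff_false, iff_false]
        rintro ⟨φ, h1, h2, -⟩
        linarith
      rw [this]; simp
    rw [this]
    exact ⟨⟨le_rfl, fun φ => by simp⟩, fun R hR => hR.1⟩
  · unfold eres
    set s := {e : ℝ | ∃ φ : V → ℝ, φ x = 1 ∧ φ y = 0 ∧ e = energyFn G φ} with hs
    have hne : s.Nonempty := ⟨_, fun a => if a = x then 1 else 0, by simp, by
      simp [Ne.symm hxy], rfl⟩
    have hbdd : BddBelow s := ⟨0, by rintro e ⟨φ, -, -, rfl⟩; exact energyFn_nonneg G φ⟩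
    have key : ∀ R, 0 < R → resBound G x y R → R⁻¹ ≤ sInf s := by
      intro R hR hb
      refine le_csInf hne ?_
      rintro e ⟨φ, h1, h2, rfl⟩
      have := hb.2 φ
      rw [h1, h2] at this
      rw [inv_le_iff_one_le_mul₀ hR]
      linarith
    obtain ⟨R0, hR0, hb0⟩ := exists_resBound G hG x y
    have hC : 0 < sInf s := lt_of_lt_of_le (inv_pos.2 hR0) (key R0 hR0 hb0)
    refine ⟨⟨(inv_pos.2 hC).le, fun φ => ?_⟩, fun R hR => ?_⟩
    · by_cases hd : φ x - φ y = 0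
      · rw [hd]
        have h1 := energyFn_nonneg G φ
        have h2 := inv_pos.2 hC
        simpa using mul_nonneg h2.le h1
      · have hm : energyFn G (fun a => (φ x - φ y)⁻¹ * φ a + (-(φ x - φ y)⁻¹ * φ y)) ∈ s := by
          refine ⟨_, ?_, ?_, rfl⟩
          · field_simp
            ring
          · ring
        have h1 := csInf_le hbdd hm
        rw [energyFn_affine] at h1
        have hd2 : 0 < (φ x - φ y)^2 := by positivity
        rw [inv_pow, le_inv_mul_iff₀ hd2] at h1
        rw [le_inv_mul_iff₀ hC]
        linarith
    · have hRp : 0 < R := by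
        rcases hR.1.lt_or_eq with h | h
        · exact h
        · have := hR.2 (fun a => if a = x then 1 else 0)
          rw [← h] at this
          simp [Ne.symm hxy] at this
          linarith
      exact inv_le_of_inv_le₀ hRp (key R hRp hR)

lemma eres_symm (G : SimpleGraph V) (hG : G.Connected) (x y : V) :
    eres G x y = eres G y x := by
  have h1 := eres_isLeast G hG x y
  have h2 := eres_isLeast G hG y x
  have : {R | resBound G x y R} = {R | resBound G y x R} := by
    ext R
    simp only [Set.mem_ofPred_eq, resBound]
    refine and_congr Iff.rfl (forall_congr' fun φ => ?_)
    rw [show (φ x - φ y)^2 = (φ y - φ x)^2 by ring]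
  rw [this] at h1
  exact h1.unique h2

lemma cut_energy (G : SimpleGraph V) (A : Set V) (u v : V) (hu : u ∈ A) (hv : v ∉ A)
    (huv : G.Adj u v)
    (hcut : ∀ a b, a ∈ A → b ∉ A → G.Adj a b → a = u ∧ b = v) (φ : V → ℝ) (k : ℝ) :
    energyFn G (fun a => if a ∈ A then k else φ a) + (φ u - φ v)^2 ≤
      energyFn G φ + (k - φ v)^2 := by
  have huv' : u ≠ v := huv.ne
  have hsum : ∀ t : ℝ, (∑ a, ∑ b, if (a = u ∧ b = v) ∨ (a = v ∧ b = u) then t else 0) = 2 * t := by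
    intro t
    have : ∀ a b, (if (a = u ∧ b = v) ∨ (a = v ∧ b = u) then t else 0) =
      (if a = u then (if b = v then t else 0) else 0) +
      (if a = v then (if b = u then t else 0) else 0) := by
      intro a b
      by_cases h1 : a = u <;> by_cases h2 : a = v <;> by_cases h3 : b = u <;>
        by_cases h4 : b = v <;> simp_all
    simp only [this, Finset.sum_add_distrib]
    simp
    ring
  have main : (∑ a, ∑ b, ((if G.Adj a b then ((if a ∈ A then k else φ a) -
      (if b ∈ A then k else φ b))^2 else 0) +
      (if (a = u ∧ b = v) ∨ (a = v ∧ b = u) then (φ u - φ v)^2 else 0))) ≤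
      ∑ a, ∑ b, ((if G.Adj a b then (φ a - φ b)^2 else 0) +
      (if (a = u ∧ b = v) ∨ (a = v ∧ b = u) then (k - φ v)^2 else 0)) := by
    refine Finset.sum_le_sum fun a _ => Finset.sum_le_sum fun b _ => ?_
    by_cases hc : (a = u ∧ b = v) ∨ (a = v ∧ b = u)
    · rw [if_pos hc, if_pos hc]
      rcases hc with ⟨rfl, rfl⟩ | ⟨rfl, rfl⟩
      · simp only [huv, hu, hv, if_true, if_false]; linarith
      · simp only [huv.symm, hu, hv, if_true, if_false]
        apply le_of_eq; ring
    · rw [if_neg hc, if_neg hc]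
      by_cases hab : G.Adj a b
      · rw [if_pos hab, if_pos hab]
        by_cases ha : a ∈ A <;> by_cases hb : b ∈ A
        · simp only [ha, hb, if_true]; simp; positivity
        · exact absurd (Or.inl (hcut a b ha hb hab)) hc
        · exact absurd (Or.inr (hcut b a hb ha hab.symm).symm) hc
        · simp only [ha, hb, if_false]; exact le_rfl
      · rw [if_neg hab, if_neg hab]
  simp only [Finset.sum_add_distrib, hsum] at main
  unfold energyFn
  linarith

lemma eres_cut (G : SimpleGraph V) (hG : G.Connected) (A : Set V) (u v : V)
    (hu : u ∈ A) (hv : v ∉ A) (huv : G.Adj u v)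
    (hcut : ∀ a b, a ∈ A → b ∉ A → G.Adj a b → a = u ∧ b = v) (x : V) (hx : x ∉ A) :
    eres G x u = eres G x v + 1 := by
  have hL := eres_isLeast G hG x u
  have hL' := eres_isLeast G hG x v
  apply le_antisymm
  · apply hL.2
    have hr := hL'.1
    refine ⟨by have := hr.1; linarith, fun φ => ?_⟩
    have h1 := cut_energy G A u v hu hv huv hcut φ (φ v)
    have h2 := hr.2 (fun a => if a ∈ A then φ v else φ a)
    simp only [hx, hv, if_false] at h2
    have h3 := energyFn_nonneg G (fun a => if a ∈ A then φ v else φ a)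
    set s := energyFn G (fun a => if a ∈ A then φ v else φ a)
    set r := eres G x v
    have hr0 : 0 ≤ r := hr.1
    have h4 : (r + 1) * (s + (φ u - φ v)^2) ≤ (r + 1) * energyFn G φ := by
      apply mul_le_mul_of_nonneg_left _ (by linarith)
      linarith [sq_nonneg (φ v - φ v), sub_self (φ v), h1, (by ring : (φ v - φ v)^2 = 0)]
    refine le_trans ?_ h4
    set a := φ x - φ v with ha
    set b := φ v - φ u with hb
    have e1 : φ x - φ u = a + b := by rw [ha, hb]; ring
    have e2 : (φ u - φ v)^2 = b^2 := by rw [hb]; ring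
    rw [e1, e2]
    -- 2ab ≤ r b^2 + s
    have h5 : 2 * (a * b) ≤ r * b^2 + s := by
      have h6 : (2 * (a * b))^2 ≤ (r * b^2 + s)^2 := by
        have : a^2 * b^2 ≤ r * s * b^2 := mul_le_mul_of_nonneg_right h2 (sq_nonneg b)
        nlinarith [sq_nonneg (r * b^2 - s)]
      exact le_of_sq_le_sq' h6 (by positivity)
    nlinarith
  · have hR := hL.1
    set R := eres G x u
    have hR1 : 1 ≤ R := by
      have h1 := cut_energy G A u v hu hv huv hcut (fun _ => 1) 0
      have h2 := hR.2 (fun a => if a ∈ A then 0 else 1)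
      have h3 : energyFn G (fun _ => (1:ℝ)) = 0 := by simp [energyFn]
      simp only [hx, hu, if_true, if_false] at h2
      rw [h3] at h1
      have := mul_le_mul_of_nonneg_left (show energyFn G (fun a => if a ∈ A then 0 else 1) ≤ 1 by
        linarith) hR.1
      linarith
    have : eres G x v ≤ R - 1 := by
      apply hL'.2
      refine ⟨by linarith, fun φ => ?_⟩
      have h2 : ∀ s : ℝ, 0 ≤ (R - 1) * (s * s) + (-2 * (φ x - φ v)) * s +
          (R * energyFn G φ - (φ x - φ v)^2) := by
        intro s
        have h1 := cut_energy G A u v hu hv huv hcut φ (φ v - s)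
        have h2 := hR.2 (fun a => if a ∈ A then φ v - s else φ a)
        simp only [hx, hu, if_true, if_false] at h2
        have h3 := mul_le_mul_of_nonneg_left (show
          energyFn G (fun a => if a ∈ A then φ v - s else φ a) ≤ energyFn G φ + s^2 by
          nlinarith [sq_nonneg (φ u - φ v)]) hR.1
        nlinarith
      have h3 := discrim_le_zero h2
      unfold discrim at h3
      have h4 : R * (φ x - φ v)^2 ≤ R * ((R - 1) * energyFn G φ) := by nlinarith
      exact le_of_mul_le_mul_left h4 (by linarith)
    linarith

end helpers

section helpers2

set_option linter.unusedSectionVars false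

variable [Fintype V]

lemma exists_parent (G : SimpleGraph V) (hG : G.Connected) {l : ℕ} [NeZero l] (c : Fin l → V) :
    ∃ (h : V → ℕ) (p : V → V), (∀ x, x ∈ Set.range c → h x = 0 ∧ p x = x) ∧
      (∀ x, x ∉ Set.range c → G.Adj x (p x) ∧ h (p x) + 1 = h x) := by
  have hmin : ∀ x, ∃ i, ∀ j, G.dist x (c i) ≤ G.dist x (c j) := fun x =>
    Finite.exists_min fun i => G.dist x (c i)
  choose m hm using hmin
  have hp : ∀ x, x ∉ Set.range c → ∃ y, G.Adj x y ∧
      G.dist y (c (m y)) + 1 = G.dist x (c (m x)) := by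
    intro x hx
    obtain ⟨w, hw⟩ := (hG.preconnected x (c (m x))).exists_walk_length_eq_dist
    generalize hd : c (m x) = d at w hw
    cases w with
    | nil => exact absurd ⟨_, hd⟩ hx
    | @cons _ y _ hxy w =>
      refine ⟨y, hxy, ?_⟩
      have h1 : G.dist y d ≤ w.length := SimpleGraph.dist_le w
      rw [SimpleGraph.Walk.length_cons] at hw
      have h2 := hm y (m x)
      rw [hd] at h2
      have h3 := hm x (m y)
      rw [hd] at h3
      have h4 : G.dist x (c (m y)) ≤ G.dist x y + G.dist y (c (m y)) := hG.dist_triangle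
      have h5 : G.dist x y = 1 := SimpleGraph.dist_eq_one_iff_adj.2 hxy
      omega
  choose! q hq using hp
  refine ⟨fun x => G.dist x (c (m x)), fun x => if x ∈ Set.range c then x else q x, ?_, ?_⟩
  · rintro x ⟨i, rfl⟩
    refine ⟨?_, by simp⟩
    have := hm (c i) i
    simpa using this
  · intro x hx
    simp only [hx, if_false]
    exact hq x hx

def edgeFn {l : ℕ} [NeZero l] (c : Fin l → V) (p : V → V) :
    {x // x ∉ Set.range c} ⊕ Fin l → Sym2 V :=
  Sum.elim (fun x => s(x.1, p x.1)) (fun i => s(c i, c (i + 1)))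

lemma edgeFn_inj {l : ℕ} [NeZero l] (hl : 3 ≤ l) (c : Fin l → V) (hinj : Function.Injective c)
    (h : V → ℕ) (p : V → V)
    (hp : ∀ x, x ∉ Set.range c → h (p x) + 1 = h x) :
    Function.Injective (edgeFn c p) := by
  rintro (⟨x, hx⟩ | i) (⟨y, hy⟩ | j) hxy
  · simp only [edgeFn, Sum.elim_inl, Sym2.eq_iff] at hxy
    rcases hxy with ⟨h1, -⟩ | ⟨h1, h2⟩
    · subst h1; rfl
    · have := hp x hx
      have := hp y hy
      rw [← h1] at this
      rw [h2] at *
      omega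
  · simp only [edgeFn, Sum.elim_inl, Sum.elim_inr, Sym2.eq_iff] at hxy
    rcases hxy with ⟨h1, -⟩ | ⟨h1, -⟩ <;> exact absurd ⟨_, h1.symm⟩ hx
  · simp only [edgeFn, Sum.elim_inl, Sum.elim_inr, Sym2.eq_iff] at hxy
    rcases hxy with ⟨h1, -⟩ | ⟨-, h1⟩ <;> exact absurd ⟨_, h1⟩ hy
  · simp only [edgeFn, Sum.elim_inr, Sym2.eq_iff] at hxy
    rcases hxy with ⟨h1, -⟩ | ⟨h1, h2⟩
    · rw [hinj h1]
    · have h1 := hinj h1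
      have h2 := hinj h2
      rw [h1] at h2
      exfalso
      have h3 : (1 + 1 : Fin l) = 0 := by
        have : j + (1 + 1) = j + 0 := by rw [← add_assoc, h2, add_zero]
        exact add_left_cancel this
      have h4 := congrArg Fin.val h3
      rw [Fin.val_add, Fin.val_one', Fin.val_zero] at h4
      rw [Nat.mod_eq_of_lt (show 1 < l by omega), Nat.mod_eq_of_lt (show 1 + 1 < l by omega)] at h4
      omega

lemma edgeFn_mem (G : SimpleGraph V) {l : ℕ} [NeZero l] (c : Fin l → V)
    (hadj : ∀ i : Fin l, G.Adj (c i) (c (i + 1))) (p : V → V)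
    (hp : ∀ x, x ∉ Set.range c → G.Adj x (p x)) (k) : edgeFn c p k ∈ G.edgeSet := by
  rcases k with ⟨x, hx⟩ | i
  · exact hp x hx
  · exact hadj i

lemma edgeFn_bij (G : SimpleGraph V) {n l : ℕ} [NeZero l]
    (hn : Fintype.card V = n) (huni : esize G = n)
    (hl : 3 ≤ l) (c : Fin l → V) (hinj : Function.Injective c)
    (hadj : ∀ i : Fin l, G.Adj (c i) (c (i + 1))) (h : V → ℕ) (p : V → V)
    (hp : ∀ x, x ∉ Set.range c → G.Adj x (p x) ∧ h (p x) + 1 = h x) :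
    Function.Bijective (fun k => (⟨edgeFn c p k,
      edgeFn_mem G c hadj p (fun x hx => (hp x hx).1) k⟩ : G.edgeSet)) := by
  rw [Fintype.bijective_iff_injective_and_card]
  constructor
  · intro a b hab
    exact edgeFn_inj hl c hinj h p (fun x hx => (hp x hx).2) (congrArg Subtype.val hab)
  · unfold esize at huni
    rw [Nat.card_eq_fintype_card] at huni
    rw [huni, ← hn, Fintype.card_sum, Fintype.card_fin]
    have h1 : Fintype.card {x // x ∈ Set.range c} = l := by
      rw [← Nat.card_eq_fintype_card]
      exact (Nat.card_range_of_injective hinj).trans (by simp)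
    have h2 := Fintype.card_subtype_compl (fun x => x ∈ Set.range c)
    have h3 := Fintype.card_subtype_le (fun x => x ∈ Set.range c)
    omega

lemma deg_eq_sum (G : SimpleGraph V) (y : V) (t : ℝ) :
    degR G y * t = ∑ e : G.edgeSet, if y ∈ e.1 then t else 0 := by
  have h1 : degR G y = (((Finset.univ : Finset G.edgeSet).filter (fun e => y ∈ e.1)).card : ℝ) := by
    unfold degR
    norm_cast
    refine Finset.card_bij (fun z hz => ⟨s(y, z), (Finset.mem_filter.1 hz).2⟩) ?_ ?_ ?_
    · intro z hz; simp
    · intro a ha b hb hab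
      have := congrArg Subtype.val hab
      exact Sym2.congr_right.1 this
    · rintro ⟨e, he⟩ hy
      simp only [Finset.mem_filter, Finset.mem_univ, true_and] at hy
      obtain ⟨z, rfl⟩ := hy
      exact ⟨z, by simpa using he, rfl⟩
  rw [h1, ← Finset.sum_filter, Finset.sum_const, nsmul_eq_mul]

lemma sum_mem_pair (f : V → ℝ) {a b : V} (hab : a ≠ b) :
    ∑ y, (if y ∈ s(a, b) then f y else 0) = f a + f b := by
  have : ∀ y, (if y ∈ s(a, b) then f y else 0) =
      (if y = a then f y else 0) + (if y = b then f y else 0) := by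
    intro y
    simp only [Sym2.mem_iff]
    by_cases h1 : y = a <;> by_cases h2 : y = b <;> simp_all
  simp only [this, Finset.sum_add_distrib]
  simp

lemma sum_deg (G : SimpleGraph V) {n l : ℕ} [NeZero l]
    (hn : Fintype.card V = n) (huni : esize G = n)
    (hl : 3 ≤ l) (c : Fin l → V) (hinj : Function.Injective c)
    (hadj : ∀ i : Fin l, G.Adj (c i) (c (i + 1))) (h : V → ℕ) (p : V → V)
    (hp : ∀ x, x ∉ Set.range c → G.Adj x (p x) ∧ h (p x) + 1 = h x) (f : V → ℝ) :
    ∑ y, degR G y * f y = ∑ x : {x // x ∉ Set.range c}, (f x.1 + f (p x.1)) +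
      2 * ∑ i, f (c i) := by
  have hb := edgeFn_bij G hn huni hl c hinj hadj h p hp
  simp only [deg_eq_sum]
  rw [Finset.sum_comm, ← hb.sum_comp (fun e : G.edgeSet => ∑ y, if y ∈ e.1 then f y else 0),
    Fintype.sum_sum_type]
  congr 1
  · refine Finset.sum_congr rfl fun x _ => ?_
    exact sum_mem_pair f (hp x.1 x.2).1.ne
  · have : ∀ i : Fin l, (∑ y, if y ∈ edgeFn c p (Sum.inr i) then f y else 0) =
        f (c i) + f (c (i + 1)) := fun i => sum_mem_pair f (hadj i).ne
    simp only [this, Finset.sum_add_distrib]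
    have h2 : ∑ i : Fin l, f (c (i + 1)) = ∑ i, f (c i) :=
      Equiv.sum_comp (Equiv.addRight (1 : Fin l)) (fun i => f (c i))
    rw [h2]
    ring

lemma adj_cases (G : SimpleGraph V) {n l : ℕ} [NeZero l]
    (hn : Fintype.card V = n) (huni : esize G = n)
    (hl : 3 ≤ l) (c : Fin l → V) (hinj : Function.Injective c)
    (hadj : ∀ i : Fin l, G.Adj (c i) (c (i + 1))) (h : V → ℕ) (p : V → V)
    (hp : ∀ x, x ∉ Set.range c → G.Adj x (p x) ∧ h (p x) + 1 = h x) {a b : V} (hab : G.Adj a b) :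
    (a ∉ Set.range c ∧ b = p a) ∨ (b ∉ Set.range c ∧ a = p b) ∨ s(a, b) ∈ cycleEdges c := by
  obtain ⟨k, hk⟩ := (edgeFn_bij G hn huni hl c hinj hadj h p hp).2 ⟨s(a, b), hab⟩
  have hk := congrArg Subtype.val hk
  rcases k with ⟨x, hx⟩ | i
  · simp only [edgeFn, Sum.elim_inl, Sym2.eq_iff] at hk
    rcases hk with ⟨rfl, rfl⟩ | ⟨rfl, rfl⟩
    · exact Or.inl ⟨hx, rfl⟩
    · exact Or.inr (Or.inl ⟨hx, rfl⟩)
  · exact Or.inr (Or.inr ⟨i, hk⟩)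

lemma mem_cycleEdges {l : ℕ} [NeZero l] {c : Fin l → V} {a b : V} (hab : s(a, b) ∈ cycleEdges c) :
    a ∈ Set.range c ∧ b ∈ Set.range c := by
  obtain ⟨i, hi⟩ := hab
  simp only [Sym2.eq_iff] at hi
  rcases hi with ⟨rfl, rfl⟩ | ⟨rfl, rfl⟩
  · exact ⟨⟨_, rfl⟩, ⟨_, rfl⟩⟩
  · exact ⟨⟨_, rfl⟩, ⟨_, rfl⟩⟩

/-- descendants of `u` -/
def desc (p : V → V) (u : V) : Set V := {x | ∃ k, p^[k] x = u}

lemma mem_desc_step (p : V → V) (u x : V) : x ∈ desc p u ↔ x = u ∨ p x ∈ desc p u := by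
  constructor
  · rintro ⟨k, hk⟩
    cases k with
    | zero => exact Or.inl hk
    | succ k => exact Or.inr ⟨k, by rwa [Function.iterate_succ_apply] at hk⟩
  · rintro (rfl | ⟨k, hk⟩)
    · exact ⟨0, rfl⟩
    · exact ⟨k + 1, by rwa [Function.iterate_succ_apply]⟩

lemma desc_root {l : ℕ} (c : Fin l → V) (p : V → V)
    (hp0 : ∀ x, x ∈ Set.range c → p x = x) {u x : V} (hu : u ∉ Set.range c)
    (hx : x ∈ Set.range c) : x ∉ desc p u := by
  rintro ⟨k, hk⟩
  rw [Function.iterate_fixed (hp0 x hx)] at hk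
  exact hu (hk ▸ hx)

lemma desc_h {l : ℕ} (c : Fin l → V) (h : V → ℕ) (p : V → V)
    (hp0 : ∀ x, x ∈ Set.range c → h x = 0 ∧ p x = x)
    (hp : ∀ x, x ∉ Set.range c → h (p x) + 1 = h x) {u x : V} (hx : x ∈ desc p u) :
    h u ≤ h x := by
  obtain ⟨k, hk⟩ := hx
  induction k generalizing x with
  | zero => exact (congrArg h hk).ge
  | succ k ih =>
    rw [Function.iterate_succ_apply] at hk
    have h1 := ih hk
    by_cases hx : x ∈ Set.range c
    · rwa [(hp0 x hx).2] at h1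
    · have := hp x hx; omega

lemma count_desc {l : ℕ} (c : Fin l → V) (h : V → ℕ) (p : V → V)
    (hp0 : ∀ x, x ∈ Set.range c → h x = 0 ∧ p x = x)
    (hp : ∀ x, x ∉ Set.range c → h (p x) + 1 = h x) (m : ℕ) (x : V) (hm : h x = m) :
    ∑ u : {x // x ∉ Set.range c}, (if x ∈ desc p u.1 then (1:ℝ) else 0) = m := by
  induction m generalizing x with
  | zero =>
    have hx : x ∈ Set.range c := by
      by_contra hx
      have := hp x hx; omega
    rw [Finset.sum_eq_zero]
    · simp
    · intro u _
      rw [if_neg (desc_root c p (fun x hx => (hp0 x hx).2) u.2 hx)]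
  | succ m ih =>
    have hx : x ∉ Set.range c := by
      intro hx
      have := (hp0 x hx).1; omega
    have h1 := hp x hx
    have h2 := ih (p x) (by omega)
    have h3 : ∀ u : {x // x ∉ Set.range c}, (if x ∈ desc p u.1 then (1:ℝ) else 0) =
        (if u = ⟨x, hx⟩ then 1 else 0) + (if p x ∈ desc p u.1 then (1:ℝ) else 0) := by
      rintro ⟨u, hu⟩
      rw [mem_desc_step]
      by_cases hux : x = u
      · subst hux
        have : p x ∉ desc p x := fun hc => by
          have := desc_h c h p hp0 hp hc; omega
        simp [this]
      · simp [hux, Ne.symm hux]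
    simp only [h3, Finset.sum_add_distrib, h2]
    simp
    ring

lemma eres_parent (G : SimpleGraph V) (hG : G.Connected) {n l : ℕ} [NeZero l]
    (hn : Fintype.card V = n) (huni : esize G = n)
    (hl : 3 ≤ l) (c : Fin l → V) (hinj : Function.Injective c)
    (hadj : ∀ i : Fin l, G.Adj (c i) (c (i + 1))) (h : V → ℕ) (p : V → V)
    (hp0 : ∀ x, x ∈ Set.range c → h x = 0 ∧ p x = x)
    (hp : ∀ x, x ∉ Set.range c → G.Adj x (p x) ∧ h (p x) + 1 = h x)
    (u : V) (hu : u ∉ Set.range c) (x : V) :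
    eres G x u + eres G x (p u) = 2 * eres G x u - 1 + 2 * (if x ∈ desc p u then (1:ℝ) else 0) := by
  have huA : u ∈ desc p u := ⟨0, rfl⟩
  have hpA : p u ∉ desc p u := fun hc => by
    have := desc_h c h p hp0 (fun x hx => (hp x hx).2) hc
    have := (hp u hu).2
    omega
  have hcut : ∀ a b, a ∈ desc p u → b ∉ desc p u → G.Adj a b → a = u ∧ b = p u := by
    intro a b ha hb hab
    rcases adj_cases G hn huni hl c hinj hadj h p hp hab with ⟨h1, rfl⟩ | ⟨h1, rfl⟩ | h1
    · rcases (mem_desc_step p u a).1 ha with rfl | h2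
      · exact ⟨rfl, rfl⟩
      · exact absurd h2 hb
    · exact absurd ((mem_desc_step p u b).2 (Or.inr ha)) hb
    · exact absurd ha (desc_root c p (fun x hx => (hp0 x hx).2) hu (mem_cycleEdges h1).1)
  by_cases hx : x ∈ desc p u
  · have := eres_cut G hG (desc p u)ᶜ (p u) u hpA (by simpa using huA) (hp u hu).1.symm
      (fun a b ha hb hab => (hcut b a (by simpa using hb) ha hab.symm).symm) x (by simpa using hx)
    rw [if_pos hx]; linarith
  · have := eres_cut G hG (desc p u) u (p u) huA hpA (hp u hu).1 hcut x hx
    rw [if_neg hx]; linarith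

lemma Rw_eq (G : SimpleGraph V) (hG : G.Connected) {n l : ℕ} [NeZero l]
    (hn : Fintype.card V = n) (huni : esize G = n)
    (hl : 3 ≤ l) (c : Fin l → V) (hinj : Function.Injective c)
    (hadj : ∀ i : Fin l, G.Adj (c i) (c (i + 1))) (h : V → ℕ) (p : V → V)
    (hp0 : ∀ x, x ∈ Set.range c → h x = 0 ∧ p x = x)
    (hp : ∀ x, x ∉ Set.range c → G.Adj x (p x) ∧ h (p x) + 1 = h x) (x : V) :
    ∑ y, degR G y * eres G x y = 2 * ∑ y, eres G x y - ((n : ℝ) - l) + 2 * h x := by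
  rw [sum_deg G hn huni hl c hinj hadj h p hp]
  have h1 : ∀ u : {x // x ∉ Set.range c}, eres G x u.1 + eres G x (p u.1) =
      2 * eres G x u - 1 + 2 * (if x ∈ desc p u.1 then (1:ℝ) else 0) := fun u =>
    eres_parent G hG hn huni hl c hinj hadj h p hp0 hp u.1 u.2 x
  simp only [h1, Finset.sum_add_distrib, Finset.sum_sub_distrib, ← Finset.mul_sum]
  rw [count_desc c h p hp0 (fun x hx => (hp x hx).2) (h x) x rfl]
  have hc1 : Fintype.card {x // x ∈ Set.range c} = l := by
    rw [← Nat.card_eq_fintype_card]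
    exact (Nat.card_range_of_injective hinj).trans (by simp)
  have hc2 := Fintype.card_subtype_compl (fun x => x ∈ Set.range c)
  have hc3 := Fintype.card_subtype_le (fun x => x ∈ Set.range c)
  have hc4 : (Fintype.card {x // x ∉ Set.range c} : ℝ) = n - l := by
    rw [eq_sub_iff_add_eq]; norm_cast; omega
  have h2 : ∑ y, eres G x y = ∑ i, eres G x (c i) +
      ∑ u : {x // x ∉ Set.range c}, eres G x u := by
    rw [← Fintype.sum_subtype_add_sum_subtype (fun x => x ∈ Set.range c)]
    congr 1
    symm
    convert Fintype.sum_equiv (Equiv.ofInjective c hinj) (fun i => eres G x (c i))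
      (fun y : {x // x ∈ Set.range c} => eres G x y.1) (fun i => rfl)
  rw [h2]
  simp only [Finset.sum_const, Finset.card_univ, hc4, nsmul_eq_mul]
  ring

lemma branch_sum (G : SimpleGraph V) {n l : ℕ} [NeZero l]
    (hn : Fintype.card V = n) (huni : esize G = n)
    (hl : 3 ≤ l) (c : Fin l → V) (hinj : Function.Injective c)
    (hadj : ∀ i : Fin l, G.Adj (c i) (c (i + 1))) (h : V → ℕ) (p : V → V)
    (hp0 : ∀ x, x ∈ Set.range c → h x = 0 ∧ p x = x)
    (hp : ∀ x, x ∉ Set.range c → G.Adj x (p x) ∧ h (p x) + 1 = h x) :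
    ∑ i : Fin l, branchD (G.deleteEdges (cycleEdges c)) (c i) = ∑ x, (h x : ℝ) := by
  set F := G.deleteEdges (cycleEdges c) with hF
  have hFp : ∀ x, x ∉ Set.range c → F.Adj x (p x) := by
    intro x hx
    rw [hF, SimpleGraph.deleteEdges_adj]
    exact ⟨(hp x hx).1, fun hc => hx (mem_cycleEdges hc).1⟩
  have hFc : ∀ a b, F.Adj a b → (a ∉ Set.range c ∧ b = p a) ∨ (b ∉ Set.range c ∧ a = p b) := by
    intro a b hab
    rw [hF, SimpleGraph.deleteEdges_adj] at hab
    rcases adj_cases G hn huni hl c hinj hadj h p hp hab.1 with h1 | h1 | h1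
    · exact Or.inl h1
    · exact Or.inr h1
    · exact absurd h1 hab.2
  -- existence of a root
  have hroot : ∀ m x, h x = m → ∃ i, ∃ w : F.Walk (c i) x, w.length = m := by
    intro m
    induction m with
    | zero =>
      intro x hm
      have hx : x ∈ Set.range c := by
        by_contra hx
        have := (hp x hx).2; omega
      obtain ⟨i, rfl⟩ := hx
      exact ⟨i, .nil, rfl⟩
    | succ m ih =>
      intro x hm
      have hx : x ∉ Set.range c := by
        intro hx
        have := (hp0 x hx).1; omega
      obtain ⟨i, w, hw⟩ := ih (p x) (by have := (hp x hx).2; omega)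
      exact ⟨i, w.concat (hFp x hx).symm, by simp [hw]⟩
  have hstep : ∀ a b, b = p a → a ∉ Set.range c → p^[h a] a = p^[h b] b := by
    rintro a b rfl ha
    rw [← (hp a ha).2, Function.iterate_succ_apply]
  have hinv : ∀ a b (w : F.Walk a b), p^[h a] a = p^[h b] b ∧ h b ≤ h a + w.length := by
    intro a b w
    induction w with
    | nil => simp
    | @cons a b d hab w ih =>
      rw [SimpleGraph.Walk.length_cons]
      rcases hFc a b hab with ⟨h1, h2⟩ | ⟨h1, h2⟩
      · have := (hp a h1).2
        rw [← h2] at this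
        exact ⟨(hstep a b h2 h1).trans ih.1, by omega⟩
      · have := (hp b h1).2
        rw [← h2] at this
        exact ⟨(hstep b a h2 h1).symm.trans ih.1, by omega⟩
  have hci : ∀ i, p^[h (c i)] (c i) = c i := fun i => by
    rw [(hp0 (c i) ⟨i, rfl⟩).1]; rfl
  unfold branchD
  rw [Finset.sum_comm]
  refine Finset.sum_congr rfl fun x _ => ?_
  obtain ⟨i, w, hw⟩ := hroot (h x) x rfl
  rw [Finset.sum_eq_single i]
  · rw [if_pos ⟨w⟩]
    norm_cast
    apply le_antisymm
    · exact hw ▸ SimpleGraph.dist_le w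
    · obtain ⟨w', hw'⟩ := (show F.Reachable (c i) x from ⟨w⟩).exists_walk_length_eq_dist
      have := (hinv _ _ w').2
      rw [(hp0 (c i) ⟨i, rfl⟩).1] at this
      omega
  · intro j _ hj
    rw [if_neg]
    rintro ⟨w'⟩
    have h1 := (hinv _ _ w').1
    have h2 := (hinv _ _ w).1
    rw [hci] at h1 h2
    exact hj (hinj (h1.trans h2.symm))
  · intro hi; exact absurd (Finset.mem_univ i) hi

end helpers2

/-- For an `n`-vertex unicyclic graph `G`,
`Kf⁺(G) = 4·Kf(G) + 2·Σ_{i=1}^{l} D_{T_i}(v_i) − n(n−l)`. -/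
theorem kfPlus_formula [Fintype V] (G : SimpleGraph V) (n l : ℕ) [NeZero l]
    (hn : Fintype.card V = n) (hconn : G.Connected) (huni : esize G = n)
    (hl : 3 ≤ l) (c : Fin l → V) (hinj : Function.Injective c)
    (hadj : ∀ i : Fin l, G.Adj (c i) (c (i + 1))) :
    KfPlus G = 4 * Kf G
      + 2 * (∑ i : Fin l, branchD (G.deleteEdges (cycleEdges c)) (c i))
      - (n : ℝ) * ((n : ℝ) - l) := by
  obtain ⟨h, p, hp0, hp⟩ := exists_parent G hconn c
  rw [branch_sum G hn huni hl c hinj hadj h p hp0 hp]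
  have h1 : KfPlus G = ∑ x, ∑ y, degR G y * eres G x y := by
    unfold KfPlus
    have e1 : ∑ x, ∑ y, degR G x * eres G x y = ∑ x, ∑ y, degR G y * eres G x y := by
      rw [Finset.sum_comm]
      refine Finset.sum_congr rfl fun x _ => Finset.sum_congr rfl fun y _ => ?_
      rw [eres_symm G hconn]
    simp only [add_mul, Finset.sum_add_distrib]
    rw [e1]; ring
  rw [h1]
  simp only [Rw_eq G hconn hn huni hl c hinj hadj h p hp0 hp, Finset.sum_add_distrib,
    Finset.sum_sub_distrib, ← Finset.mul_sum, Finset.sum_const, Finset.card_univ, hn,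
    nsmul_eq_mul, Kf]
  ring
end

section
/- Let G be an n-vertex unicyclic graph whose unique cycle has length l, and let x be any vertex of G. Then CC(x) ≤ l³/2 − (4n+3)l²/6 + n(2n²+3n−1)/6, with equality if and only if G is the lollipop graph P_n^l (a cycle C_l with a path P_{n−l+1} attached by identifying an endpoint with a cycle vertex) and x lies on the cycle. -/
open SimpleGraph Finset

attribute [local instance] Classical.propDecidable

variable {V : Type*}

/-! hitting times -/
lemma hitMat_mulVec [Fintype V] (G : SimpleGraph V) (y : V) (f : V → ℝ) (u : V) :
    (hitMat G y).mulVec f u = ∑ v, if v = y then 0 else if G.Adj u v then (degR G u)⁻¹ * f v else 0 := by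
  simp only [Matrix.mulVec, dotProduct, hitMat, Matrix.of_apply]
  refine Finset.sum_congr rfl fun v _ => ?_
  split_ifs <;> simp

lemma degR_eq [Fintype V] (G : SimpleGraph V) (u : V) :
    degR G u = ∑ v, if G.Adj u v then (1:ℝ) else 0 := by
  simp [degR]

lemma hit_nonneg [Fintype V] (G : SimpleGraph V) (y : V) (f : V → ℝ) (hy : f y = 0)
    (hd : ∀ u, 0 < degR G u)
    (hf : ∀ u, u ≠ y → (∑ v, if G.Adj u v then f u - f v else 0) = degR G u) (x : V) :
    0 ≤ f x := by
  obtain ⟨m, -, hm⟩ := Finset.exists_min_image Finset.univ f ⟨y, Finset.mem_univ y⟩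
  by_cases hmy : m = y
  · have := hm x (Finset.mem_univ x)
    rw [hmy, hy] at this; exact this
  · have h1 := hf m hmy
    have h2 : (∑ v, if G.Adj m v then f m - f v else 0) ≤ 0 := by
      apply Finset.sum_nonpos
      intro v _
      split_ifs
      · linarith [hm v (Finset.mem_univ v)]
      · exact le_rfl
    linarith [hd m]

lemma hit_vec [Fintype V] (G : SimpleGraph V) (y : V) (f : V → ℝ) (hy : f y = 0)
    (hd : ∀ u, 0 < degR G u)
    (hf : ∀ u, u ≠ y → (∑ v, if G.Adj u v then f u - f v else 0) = degR G u) (u : V) (hu : u ≠ y) :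
    f u = 1 + (hitMat G y).mulVec f u := by
  rw [hitMat_mulVec]
  have h1 : (∑ v, if v = y then 0 else if G.Adj u v then (degR G u)⁻¹ * f v else 0)
      = (degR G u)⁻¹ * ∑ v, if G.Adj u v then f v else 0 := by
    rw [Finset.mul_sum]
    refine Finset.sum_congr rfl fun v _ => ?_
    split_ifs with h2 h3 <;> simp [h2, hy]
  have h2 : (∑ v, if G.Adj u v then f u - f v else 0)
      = degR G u * f u - ∑ v, if G.Adj u v then f v else 0 := by
    rw [degR_eq, Finset.sum_mul, ← Finset.sum_sub_distrib]
    refine Finset.sum_congr rfl fun v _ => ?_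
    split_ifs <;> simp
  have h3 := hf u hu
  rw [h2] at h3
  rw [h1]
  have := (hd u).ne'
  field_simp
  linarith

lemma hitting_eq [Fintype V] (G : SimpleGraph V) (y : V) (f : V → ℝ) (hy : f y = 0)
    (hd : ∀ u, 0 < degR G u)
    (hf : ∀ u, u ≠ y → (∑ v, if G.Adj u v then f u - f v else 0) = degR G u) (x : V) :
    hitting G x y = f x := by
  unfold hitting
  split_ifs with hxy
  · rw [hxy, hy]
  set Q := hitMat G y with hQ
  have hQ0 : ∀ u v, 0 ≤ Q u v := by
    intro u v
    simp only [hQ, hitMat, Matrix.of_apply]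
    split_ifs
    · exact le_rfl
    · exact (inv_pos.2 (hd u)).le
    · exact le_rfl
  have hfn := hit_nonneg G y f hy hd hf
  let g : V → ℝ := fun u => 1 + Q.mulVec f u
  have hgf : ∀ u, u ≠ y → g u = f u := fun u hu => (hit_vec G y f hy hd hf u hu).symm
  have hQg : Q.mulVec g = Q.mulVec f := by
    ext u
    rw [hQ, hitMat_mulVec, hitMat_mulVec]
    refine Finset.sum_congr rfl fun v _ => ?_
    split_ifs with h2 h3
    · rfl
    · rw [hgf v h2]
    · rfl
  have hg1 : ∀ u, g u = 1 + Q.mulVec g u := by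
    intro u; rw [hQg]
  have hgpos : ∀ u, 1 ≤ g u := by
    intro u
    have : 0 ≤ Q.mulVec f u := Finset.sum_nonneg fun v _ => mul_nonneg (hQ0 u v) (hfn v)
    show 1 ≤ 1 + Q.mulVec f u
    linarith
  obtain ⟨m, -, hm⟩ := Finset.exists_max_image Finset.univ g ⟨y, Finset.mem_univ y⟩
  set M := g m
  have hM : 1 ≤ M := hgpos m
  set r := 1 - 1 / M with hr
  have hr0 : 0 ≤ r := by
    rw [hr, sub_nonneg, div_le_one (by linarith)]; exact hM
  have hr1 : r < 1 := by
    have : 0 < 1 / M := by positivity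
    linarith
  have hQr : ∀ u, Q.mulVec g u ≤ r * g u := by
    intro u
    have h1 := hg1 u
    have h2 : g u / M ≤ 1 := by
      rw [div_le_one (by linarith)]; exact hm u (Finset.mem_univ u)
    have : r * g u = g u - g u / M := by rw [hr]; ring
    linarith
  have hpow : ∀ k : ℕ, ∀ u, 0 ≤ (Q ^ k).mulVec g u ∧ (Q ^ k).mulVec g u ≤ r ^ k * g u := by
    intro k
    induction k with
    | zero => intro u; simp; linarith [hgpos u]
    | succ k ih =>
      intro u
      rw [pow_succ', ← Matrix.mulVec_mulVec]
      constructor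
      · exact Finset.sum_nonneg fun v _ => mul_nonneg (hQ0 u v) (ih v).1
      · calc Q.mulVec ((Q ^ k).mulVec g) u ≤ ∑ v, Q u v * (r ^ k * g v) :=
              Finset.sum_le_sum fun v _ => mul_le_mul_of_nonneg_left (ih v).2 (hQ0 u v)
          _ = r ^ k * Q.mulVec g u := by
              simp only [Matrix.mulVec, dotProduct]
              rw [Finset.mul_sum]
              refine Finset.sum_congr rfl fun v _ => by ring
          _ ≤ r ^ k * (r * g u) := mul_le_mul_of_nonneg_left (hQr u) (pow_nonneg hr0 k)
          _ = r ^ (k+1) * g u := by ring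
  have hone : ∀ k : ℕ, ∀ u, (∑ z, (Q ^ k) u z) = (Q ^ k).mulVec g u - (Q ^ (k+1)).mulVec g u := by
    intro k u
    rw [pow_succ, ← Matrix.mulVec_mulVec]
    simp only [Matrix.mulVec, dotProduct]
    rw [← Finset.sum_sub_distrib]
    refine Finset.sum_congr rfl fun v _ => ?_
    have := hg1 v
    simp only [Matrix.mulVec, dotProduct] at this
    rw [← mul_sub]
    have h3 : g v - ∑ x, Q v x * g x = 1 := by linarith
    rw [h3, mul_one]
  have hsum : ∀ N : ℕ, ∑ k ∈ Finset.range N, ∑ z, (Q ^ k) x z = g x - (Q ^ N).mulVec g x := by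
    intro N
    induction N with
    | zero => simp
    | succ N ih => rw [Finset.sum_range_succ, ih, hone]; ring
  have hnn : ∀ k : ℕ, 0 ≤ ∑ z, (Q ^ k) x z := by
    intro k
    apply Finset.sum_nonneg
    intro z _
    have : ∀ k : ℕ, ∀ u v, 0 ≤ (Q ^ k) u v := by
      intro k
      induction k with
      | zero => intro u v; simp [Matrix.one_apply]; split_ifs <;> norm_num
      | succ k ih =>
        intro u v
        rw [pow_succ, Matrix.mul_apply]
        exact Finset.sum_nonneg fun w _ => mul_nonneg (ih u w) (hQ0 w v)
    exact this k x z
  have htend : Filter.Tendsto (fun N : ℕ => (Q ^ N).mulVec g x) Filter.atTop (nhds 0) := by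
    have h0 : Filter.Tendsto (fun N : ℕ => r ^ N * g x) Filter.atTop (nhds 0) := by
      simpa using (tendsto_pow_atTop_nhds_zero_of_lt_one hr0 hr1).mul_const (g x)
    exact squeeze_zero (fun N => (hpow N x).1) (fun N => (hpow N x).2) h0
  have hS : HasSum (fun k : ℕ => ∑ z, (Q ^ k) x z) (g x) := by
    rw [hasSum_iff_tendsto_nat_of_nonneg hnn]
    have := htend.const_sub (g x)
    rw [sub_zero] at this
    refine this.congr fun N => (hsum N).symm
  rw [hS.tsum_eq, hgf x hxy]

/-! combinatorics of functional unicyclic structure on `ℕ` -/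
structure UQ (l : ℕ) (q : ℕ → ℕ) : Prop where
  hl : 3 ≤ l
  h1 : ∀ i, i + 1 < l → q i = i + 1
  h2 : ∀ i, i + 1 = l → q i = 0
  h3 : ∀ i, l ≤ i → q i < i

def AQ (q : ℕ → ℕ) (u v : ℕ) : Prop := q u = v ∨ q v = u

noncomputable def hQ (l : ℕ) (q : ℕ → ℕ) (i : ℕ) : ℕ :=
  if h : l ≤ i ∧ q i < i then hQ l q (q i) + 1 else 0
termination_by i
decreasing_by exact h.2

noncomputable def rQ (l : ℕ) (q : ℕ → ℕ) (i j : ℕ) : ℝ :=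
  if i = j then 0
  else if h : l ≤ i ∧ j < i ∧ q i < i then rQ l q (q i) j + 1
  else if h : l ≤ j ∧ i < j ∧ q j < j then rQ l q i (q j) + 1
  else |(i:ℝ) - j| * (l - |(i:ℝ) - j|) / l
termination_by i + j
decreasing_by all_goals omega

section
variable {l : ℕ} {q : ℕ → ℕ} (hu : UQ l q)

lemma hQ_lt {i : ℕ} (hi : i < l) : hQ l q i = 0 := by
  rw [hQ]; rw [dif_neg]; omega

lemma hQ_ge (hu : UQ l q) {i : ℕ} (hi : l ≤ i) : hQ l q i = hQ l q (q i) + 1 := by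
  rw [hQ]; rw [dif_pos ⟨hi, hu.h3 i hi⟩]

lemma rQ_self (i : ℕ) : rQ l q i i = 0 := by
  rw [rQ]; simp

lemma rQ_left (hu : UQ l q) {i j : ℕ} (hi : l ≤ i) (hj : j < i) : rQ l q i j = rQ l q (q i) j + 1 := by
  rw [rQ]; rw [if_neg (by omega), dif_pos ⟨hi, hj, hu.h3 i hi⟩]

lemma rQ_right (hu : UQ l q) {i j : ℕ} (hi : l ≤ j) (hj : i < j) : rQ l q i j = rQ l q i (q j) + 1 := by
  rw [rQ]; rw [if_neg (by omega), dif_neg (by omega), dif_pos ⟨hi, hj, hu.h3 j hi⟩]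

lemma rQ_cyc {i j : ℕ} (hi : i < l) (hj : j < l) :
    rQ l q i j = |(i:ℝ) - j| * (l - |(i:ℝ) - j|) / l := by
  rw [rQ]
  split_ifs with h h h
  · subst h; simp
  · omega
  · omega
  · rfl

lemma rQ_symm (hu : UQ l q) (i j : ℕ) : rQ l q i j = rQ l q j i := by
  induction hk : i + j using Nat.strong_induction_on generalizing i j with
  | _ k ih =>
    rcases lt_trichotomy i j with h | h | h
    · by_cases hj : l ≤ j
      · rw [rQ_right hu hj h, rQ_left hu hj h, ih (i + q j) _ i (q j) rfl]
        have := hu.h3 j hj; omega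
      · rw [rQ_cyc (by omega) (by omega), rQ_cyc (by omega) (by omega), abs_sub_comm]
    · rw [h]
    · by_cases hj : l ≤ i
      · rw [rQ_right hu hj h, rQ_left hu hj h, ih (q i + j) _ (q i) j rfl]
        have := hu.h3 i hj; omega
      · rw [rQ_cyc (by omega) (by omega), rQ_cyc (by omega) (by omega), abs_sub_comm]

lemma q_lt (hu : UQ l q) {n i : ℕ} (hn : l ≤ n) (hi : i < n) : q i < n := by
  have := hu.hl
  by_cases h : l ≤ i
  · have := hu.h3 i h; omega
  · by_cases h' : i + 1 = l
    · rw [hu.h2 i h']; omega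
    · rw [hu.h1 i (by omega)]; omega

lemma AQ_last (hu : UQ l q) {n u : ℕ} (hn : l ≤ n) (hi : u < n) : AQ q u n ↔ u = q n := by
  unfold AQ
  have := q_lt hu hn hi
  constructor
  · rintro (h | h) <;> omega
  · intro h; right; exact h.symm

lemma AQ_symm {u v : ℕ} : AQ q u v ↔ AQ q v u := by unfold AQ; tauto

lemma AQ_self_last (hu : UQ l q) {n : ℕ} (hn : l ≤ n) : ¬ AQ q n n := by
  unfold AQ
  have := hu.h3 n hn
  omega

noncomputable def lapQ (q : ℕ → ℕ) (n : ℕ) (F : ℕ → ℝ) (u : ℕ) : ℝ :=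
  ∑ v ∈ Finset.range n, if AQ q u v then F u - F v else 0

noncomputable def degQ (q : ℕ → ℕ) (n : ℕ) (u : ℕ) : ℝ :=
  ∑ v ∈ Finset.range n, if AQ q u v then (1:ℝ) else 0

noncomputable def prQ (l u : ℕ) : ℕ := if u = 0 then l - 1 else u - 1

lemma AQ_cyc (hu : UQ l q) {u v : ℕ} (hi : u < l) (hv : v < l) :
    AQ q u v ↔ v = q u ∨ v = prQ l u := by
  unfold AQ prQ
  have := hu.hl
  have hv1 := hu.h1 v
  have hv2 := hu.h2 v
  constructor
  · rintro (h | h)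
    · left; exact h.symm
    · right
      by_cases hh : v + 1 < l
      · have := hv1 hh; split_ifs <;> omega
      · have := hv2 (by omega); split_ifs <;> omega
  · rintro (h | h)
    · left; exact h.symm
    · right
      split_ifs at h
      · have := hv2 (by omega); omega
      · have := hv1 (by omega); omega

lemma q_cases (hu : UQ l q) {u : ℕ} (hi : u < l) : (u + 1 < l ∧ q u = u + 1) ∨ (u + 1 = l ∧ q u = 0) := by
  by_cases h : u + 1 < l
  · exact Or.inl ⟨h, hu.h1 u h⟩
  · exact Or.inr ⟨by omega, hu.h2 u (by omega)⟩

lemma cyc_sum (hu : UQ l q) {u : ℕ} (hi : u < l) (g : ℕ → ℝ) :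
    (∑ v ∈ Finset.range l, if AQ q u v then g v else 0) = g (q u) + g (prQ l u) := by
  have hl := hu.hl
  have hne : q u ≠ prQ l u := by
    unfold prQ
    rcases q_cases hu hi with h | h <;> split_ifs <;> omega
  have hp : prQ l u < l := by unfold prQ; split_ifs <;> omega
  have hq : q u < l := q_lt hu le_rfl hi
  have : ∀ v ∈ Finset.range l, (if AQ q u v then g v else 0) =
      (if v = q u then g v else 0) + (if v = prQ l u then g v else 0) := by
    intro v hv
    rw [Finset.mem_range] at hv
    have h1 := AQ_cyc hu hi hv
    by_cases h2 : v = q u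
    · rw [if_pos (h1.2 (Or.inl h2)), if_pos h2, if_neg (by rw [h2]; exact hne), add_zero]
    · by_cases h3 : v = prQ l u
      · rw [if_pos (h1.2 (Or.inr h3)), if_neg h2, if_pos h3, zero_add]
      · rw [if_neg (by rw [h1]; tauto), if_neg h2, if_neg h3, add_zero]
  rw [Finset.sum_congr rfl this, Finset.sum_add_distrib, Finset.sum_ite_eq', Finset.sum_ite_eq',
    if_pos (Finset.mem_range.2 hq), if_pos (Finset.mem_range.2 hp)]

lemma degQ_base (hu : UQ l q) {u : ℕ} (hi : u < l) : degQ q l u = 2 := by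
  unfold degQ; rw [cyc_sum hu hi]; norm_num

lemma rQ_cyc_ge {i j : ℕ} (hi : i < l) (hj : j ≤ i) :
    rQ l q i j = ((i:ℝ) - j) * (l - ((i:ℝ) - j)) / l := by
  rw [rQ_cyc hi (by omega), abs_of_nonneg]
  have : (j:ℝ) ≤ i := by exact_mod_cast hj
  linarith

lemma rQ_cyc_le {i j : ℕ} (hi : j < l) (hj : i ≤ j) :
    rQ l q i j = ((j:ℝ) - i) * (l - ((j:ℝ) - i)) / l := by
  rw [rQ_cyc (by omega) (by omega), abs_sub_comm, abs_of_nonneg]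
  have : (i:ℝ) ≤ j := by exact_mod_cast hj
  linarith

lemma lap_base (hu : UQ l q) {u y : ℕ} (hi : u < l) (hy : y < l) :
    lapQ q l (fun v => rQ l q v y) u = 2 / l - (if u = y then 2 else 0) := by
  have hl := hu.hl
  have hl0 : (l:ℝ) ≠ 0 := by positivity
  unfold lapQ
  beta_reduce
  rw [cyc_sum hu hi]
  unfold prQ
  obtain ⟨k, rfl⟩ : ∃ k, l = k + 1 := ⟨l - 1, by omega⟩
  rcases lt_trichotomy u y with h | h | h
  · rw [if_neg (by omega : ¬ u = y)]
    have e1 : q u = u + 1 := hu.h1 u (by omega)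
    rw [e1, rQ_cyc_le hy (by omega : u ≤ y), rQ_cyc_le hy (by omega : u + 1 ≤ y)]
    split_ifs with h0
    · subst h0
      rw [rQ_cyc_ge (by omega) (by omega)]
      simp only [Nat.add_sub_cancel]
      push_cast at *
      field_simp
      ring
    · obtain ⟨w, rfl⟩ : ∃ w, u = w + 1 := ⟨u - 1, by omega⟩
      simp only [Nat.add_sub_cancel]
      rw [rQ_cyc_le (by omega) (by omega)]
      push_cast at *
      field_simp
      ring
  · subst h
    rw [if_pos rfl, rQ_self]
    have e1 : rQ (k+1) q (q u) u = k / (k+1) := by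
      rcases q_cases hu hi with ⟨h3, h4⟩ | ⟨h3, h4⟩
      · rw [h4, rQ_cyc_ge h3 (by omega)]; push_cast; ring
      · rw [h4, rQ_cyc_le hi (by omega)]
        have : u = k := by omega
        subst this; push_cast; ring
    have e2 : rQ (k+1) q (if u = 0 then k + 1 - 1 else u - 1) u = k / (k+1) := by
      split_ifs with h0
      · subst h0
        simp only [Nat.add_sub_cancel]
        rw [rQ_cyc_ge (by omega) (by omega)]; push_cast; ring
      · obtain ⟨w, rfl⟩ : ∃ w, u = w + 1 := ⟨u - 1, by omega⟩
        simp only [Nat.add_sub_cancel]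
        rw [rQ_cyc_le (by omega) (by omega)]; push_cast; ring
    rw [e1, e2]
    push_cast at *
    field_simp
    ring
  · rw [if_neg (by omega : ¬ u = y), if_neg (by omega : ¬ u = 0)]
    obtain ⟨w, rfl⟩ : ∃ w, u = w + 1 := ⟨u - 1, by omega⟩
    simp only [Nat.add_sub_cancel]
    rw [rQ_cyc_ge hi (by omega : y ≤ w + 1), rQ_cyc_ge (by omega) (by omega : y ≤ w)]
    rcases q_cases hu hi with ⟨h3, h4⟩ | ⟨h3, h4⟩
    · rw [h4, rQ_cyc_ge h3 (by omega)]
      push_cast at *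
      field_simp
      ring
    · rw [h4, rQ_cyc_le hy (by omega)]
      have : k = w + 1 := by omega
      subst this
      push_cast at *
      field_simp
      ring

lemma degQ_succ (hu : UQ l q) {n u : ℕ} (hn : l ≤ n) (hi : u < n) :
    degQ q (n+1) u = degQ q n u + if u = q n then 1 else 0 := by
  unfold degQ
  rw [Finset.sum_range_succ]
  simp only [AQ_last hu hn hi]

lemma lapQ_succ (hu : UQ l q) {n u : ℕ} (hn : l ≤ n) (hi : u < n) (F : ℕ → ℝ) :
    lapQ q (n+1) F u = lapQ q n F u + if u = q n then F u - F n else 0 := by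
  unfold lapQ
  rw [Finset.sum_range_succ]
  simp only [AQ_last hu hn hi]

lemma last_sum (hu : UQ l q) {n : ℕ} (hn : l ≤ n) (g : ℕ → ℝ) :
    (∑ v ∈ Finset.range (n+1), if AQ q n v then g v else 0) = g (q n) := by
  have hq := hu.h3 n hn
  rw [Finset.sum_range_succ, if_neg (AQ_self_last hu hn), add_zero]
  have : ∀ v ∈ Finset.range n, (if AQ q n v then g v else 0) = (if v = q n then g v else 0) := by
    intro v hv
    rw [Finset.mem_range] at hv
    simp only [AQ_symm (u := n), AQ_last hu hn hv]
  rw [Finset.sum_congr rfl this, Finset.sum_ite_eq', if_pos (Finset.mem_range.2 hq)]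

lemma lap_r (hu : UQ l q) {n : ℕ} (hn : l ≤ n) : ∀ {u y : ℕ}, u < n → y < n →
    lapQ q n (fun v => rQ l q v y) u =
      2 - degQ q n u + (if u < l then 2 / (l:ℝ) else 0) - (if u = y then 2 else 0) := by
  induction n, hn using Nat.le_induction with
  | base =>
    intro u y hi hy
    rw [lap_base hu hi hy, degQ_base hu hi, if_pos hi]; ring
  | succ n hn ih =>
    intro u y hi hy
    have hq := hu.h3 n hn
    by_cases hun : u = n
    · subst hun
      have e1 : degQ q (u+1) u = 1 := by unfold degQ; rw [last_sum hu hn]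
      rw [e1]
      unfold lapQ
      beta_reduce
      rw [last_sum hu hn, if_neg (by omega : ¬ u < l)]
      by_cases hyn : y = u
      · subst hyn
        rw [rQ_self, rQ_right hu hn hq, rQ_self, if_pos rfl]; norm_num
      · rw [rQ_left hu hn (by omega : y < u), if_neg (by omega)]; ring
    · have hun' : u < n := by omega
      rw [lapQ_succ hu hn hun', degQ_succ hu hn hun']
      by_cases hyn : y = n
      · subst hyn
        have e1 : lapQ q y (fun v => rQ l q v y) u = lapQ q y (fun v => rQ l q v (q y)) u := by
          unfold lapQ
          beta_reduce
          refine Finset.sum_congr rfl fun v hv => ?_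
          rw [Finset.mem_range] at hv
          rw [rQ_right hu hn hv, rQ_right hu hn hun']
          simp
        rw [e1, ih hun' hq, if_neg hun]
        split_ifs with h1 h2 h2
        · rw [h2, rQ_right hu hn hq, rQ_self, rQ_self]; ring
        · ring
        · rw [h2, rQ_right hu hn hq, rQ_self, rQ_self]; ring
        · ring
      · rw [ih hun' (by omega), rQ_left hu hn (by omega : y < n)]
        by_cases h1 : u = q n
        · rw [if_pos h1, if_pos h1, ← h1]; ring
        · rw [if_neg h1, if_neg h1]; ring

lemma lap_h (hu : UQ l q) {n : ℕ} (hn : l ≤ n) : ∀ {u : ℕ}, u < n →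
    lapQ q n (fun v => (hQ l q v : ℝ)) u = 2 - degQ q n u := by
  induction n, hn using Nat.le_induction with
  | base =>
    intro u hi
    unfold lapQ
    beta_reduce
    rw [degQ_base hu hi, cyc_sum hu hi, hQ_lt hi, hQ_lt (q_lt hu le_rfl hi), hQ_lt]
    · norm_num
    · have := hu.hl
      unfold prQ; split_ifs <;> omega
  | succ n hn ih =>
    intro u hi
    have hq := hu.h3 n hn
    by_cases hun : u = n
    · subst hun
      have e1 : degQ q (u+1) u = 1 := by unfold degQ; rw [last_sum hu hn]
      rw [e1]
      unfold lapQ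
      beta_reduce
      rw [last_sum hu hn, hQ_ge hu hn]
      push_cast; ring
    · have hun' : u < n := by omega
      rw [lapQ_succ hu hn hun', degQ_succ hu hn hun', ih hun', hQ_ge hu hn]
      split_ifs with h1
      · subst h1; push_cast; ring
      · ring

/-- explicit hitting time -/
noncomputable def HQ (l : ℕ) (q : ℕ → ℕ) (n x y : ℕ) : ℝ :=
  n * rQ l q x y + (∑ z ∈ Finset.range n, rQ l q y z) - (∑ z ∈ Finset.range n, rQ l q x z)
    + hQ l q y - hQ l q x

lemma lap_H (hu : UQ l q) {n : ℕ} (hn : l ≤ n) {u y : ℕ} (hun : u < n) (hy : y < n) (huy : u ≠ y) :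
    lapQ q n (fun v => HQ l q n v y) u = degQ q n u := by
  have e : lapQ q n (fun v => HQ l q n v y) u = n * lapQ q n (fun v => rQ l q v y) u
      - (∑ z ∈ Finset.range n, lapQ q n (fun v => rQ l q v z) u)
      - lapQ q n (fun v => (hQ l q v : ℝ)) u := by
    unfold lapQ
    rw [Finset.sum_comm, Finset.mul_sum, ← Finset.sum_sub_distrib, ← Finset.sum_sub_distrib]
    refine Finset.sum_congr rfl fun v _ => ?_
    by_cases h : AQ q u v
    · simp only [h, if_true, HQ, Finset.sum_sub_distrib]; ring
    · simp [h]
  rw [e, lap_h hu hn hun, lap_r hu hn hun hy, if_neg huy,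
    Finset.sum_congr rfl (fun z hz => lap_r hu hn hun (Finset.mem_range.1 hz)),
    Finset.sum_sub_distrib, Finset.sum_ite_eq, if_pos (Finset.mem_range.2 hun)]
  simp only [Finset.sum_const, Finset.card_range, nsmul_eq_mul]
  ring

lemma sum_H (n x : ℕ) : (∑ y ∈ Finset.range n, HQ l q n x y) =
    (∑ y ∈ Finset.range n, ∑ z ∈ Finset.range n, rQ l q y z)
    + (∑ y ∈ Finset.range n, (hQ l q y : ℝ)) - n * hQ l q x := by
  simp only [HQ, Finset.sum_add_distrib, Finset.sum_sub_distrib, ← Finset.mul_sum]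
  simp only [Finset.sum_const, Finset.card_range, nsmul_eq_mul]
  ring

lemma HQ_self (n x : ℕ) : HQ l q n x x = 0 := by
  simp [HQ, rQ_self]

/-! bounds -/
lemma hQ_le (hu : UQ l q) (i : ℕ) (hi : l ≤ i) : hQ l q i + l ≤ i + 1 := by
  induction i using Nat.strong_induction_on with
  | _ i ih =>
    have h3 := hu.h3 i hi
    rw [hQ_ge hu hi]
    by_cases h : l ≤ q i
    · have := ih _ h3 h; omega
    · rw [hQ_lt (by omega)]; omega

lemma sum_h_le (hu : UQ l q) {n : ℕ} (hn : l ≤ n) :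
    (∑ y ∈ Finset.range n, (hQ l q y : ℝ)) ≤ ((n:ℝ) - l) * (n - l + 1) / 2 ∧
    ((∑ y ∈ Finset.range n, (hQ l q y : ℝ)) = ((n:ℝ) - l) * (n - l + 1) / 2 ↔
      ∀ i, l < i → i < n → q i + 1 = i) := by
  induction n, hn using Nat.le_induction with
  | base =>
    have : (∑ y ∈ Finset.range l, (hQ l q y : ℝ)) = 0 := by
      apply Finset.sum_eq_zero
      intro i hi
      rw [hQ_lt (Finset.mem_range.1 hi)]; simp
    rw [this]
    constructor
    · simp
    · constructor
      · intro _ i h1 h2; omega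
      · intro _; simp
  | succ n hn ih =>
    rw [Finset.sum_range_succ]
    have h1 := hQ_le hu n hn
    have h2 : (hQ l q n : ℝ) + l ≤ n + 1 := by exact_mod_cast h1
    push_cast
    constructor
    · linarith [ih.1]
    · constructor
      · intro h
        have h4 : (hQ l q n : ℝ) + l = n + 1 := by linarith [ih.1]
        have h5 : hQ l q n + l = n + 1 := by exact_mod_cast h4
        have h6 := ih.2.1 (by linarith [ih.1])
        intro i hi hi'
        by_cases hin : i = n
        · subst hin
          rw [hQ_ge hu hn] at h5
          have h3 := hu.h3 i hn
          by_cases h7 : l ≤ q i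
          · have := hQ_le hu _ h7; omega
          · rw [hQ_lt (by omega)] at h5; omega
        · exact h6 i hi (by omega)
      · intro h
        have h6 := ih.2.2 (fun i hi hi' => h i hi (by omega))
        have h7 : ∀ i, l ≤ i → i ≤ n → hQ l q i + l = i + 1 := by
          intro i hi
          induction i, hi using Nat.le_induction with
          | base =>
            intro _
            rw [hQ_ge hu le_rfl, hQ_lt (hu.h3 l le_rfl)]; omega
          | succ i hi ih2 =>
            intro hin
            have := h (i+1) (by omega) (by omega)
            rw [hQ_ge hu (by omega)]
            have e : q (i+1) = i := by omega
            rw [e]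
            have := ih2 (by omega); omega
        have h8 : (hQ l q n : ℝ) + l = n + 1 := by exact_mod_cast h7 n hn le_rfl
        linarith

lemma rQ_le (hu : UQ l q) (n : ℕ) (hn : l ≤ n) : ∀ i j, i < n → j < n → rQ l q i j ≤ (n:ℝ) - 1 := by
  induction n, hn using Nat.le_induction with
  | base =>
    intro i j hi hj
    by_cases hij : i = j
    · subst hij; rw [rQ_self]
      have : (3:ℝ) ≤ l := by exact_mod_cast hu.hl
      linarith
    rw [rQ_cyc hi hj]
    have hl : (0:ℝ) < l := by have := hu.hl; positivity
    have h1 : (i:ℝ) + 1 ≤ l := by exact_mod_cast hi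
    have h2 : (j:ℝ) + 1 ≤ l := by exact_mod_cast hj
    have h3 : (0:ℝ) ≤ i := by positivity
    have h4 : (0:ℝ) ≤ j := by positivity
    have h5 : |(i:ℝ) - j| ≤ l - 1 := by rw [abs_le]; constructor <;> linarith
    have h6 := abs_nonneg ((i:ℝ) - j)
    rw [div_le_iff₀ hl]
    exact mul_le_mul h5 (by linarith) (by linarith) (by linarith)
  | succ n hn ih =>
    intro i j hi hj
    have hq := hu.h3 n hn
    have h0 : (3:ℝ) ≤ n := by exact_mod_cast le_trans hu.hl hn
    push_cast
    by_cases h1 : i = n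
    · by_cases h2 : j = n
      · rw [h1, h2, rQ_self]; linarith
      · rw [h1, rQ_left hu hn (by omega)]
        linarith [ih (q n) j hq (by omega)]
    · by_cases h2 : j = n
      · rw [h2, rQ_right hu hn (by omega)]
        linarith [ih i (q n) (by omega) hq]
      · linarith [ih i j (by omega) (by omega)]

noncomputable def MQ (l n : ℕ) : ℝ := ((l:ℝ)^2 - 1) / 6 + n * (n - 1) / 2 - l * (l - 1) / 2

lemma row_base (hu : UQ l q) {i : ℕ} (hi : i < l) : (∑ j ∈ Finset.range l, rQ l q i j) = MQ l l := by
  have hl : (l:ℝ) ≠ 0 := by have := hu.hl; positivity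
  have e1 : ∀ m i : ℕ, ∑ j ∈ Finset.range m, ((i:ℝ) - j)^2 =
      m * i^2 - i * m * (m - 1) + m * (m - 1) * (2 * m - 1) / 6 := by
    intro m i
    induction m with
    | zero => simp
    | succ m ih => rw [Finset.sum_range_succ, ih]; push_cast; ring
  have e2 : ∀ i m : ℕ, m ≤ i → ∑ j ∈ Finset.range m, |(i:ℝ) - j| = m * i - m * (m-1) / 2 := by
    intro i m
    induction m with
    | zero => simp
    | succ m ih =>
      intro h
      have : (m:ℝ) + 1 ≤ i := by exact_mod_cast h
      rw [Finset.sum_range_succ, ih (by omega), abs_of_nonneg (by linarith)]; push_cast; ring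
  have e3 : ∀ i m : ℕ, i ≤ m → ∑ j ∈ Finset.range m, |(i:ℝ) - j| =
      i * (i + 1) / 2 + (m - i) * (m - i - 1) / 2 := by
    intro i m h
    induction m, h using Nat.le_induction with
    | base => rw [e2 i i le_rfl]; ring
    | succ m h ih =>
      have : (i:ℝ) ≤ m := by exact_mod_cast h
      rw [Finset.sum_range_succ, ih, abs_of_nonpos (by linarith)]; push_cast; ring
  have e4 : ∀ j ∈ Finset.range l, rQ l q i j = |(i:ℝ) - j| - ((i:ℝ) - j)^2 / l := by
    intro j hj
    rw [rQ_cyc hi (Finset.mem_range.1 hj), ← sq_abs ((i:ℝ) - j)]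
    field_simp
  rw [Finset.sum_congr rfl e4, Finset.sum_sub_distrib, ← Finset.sum_div, e1, e3 i l hi.le]
  unfold MQ
  field_simp
  ring

lemma row_last (hu : UQ l q) {n : ℕ} (hn : l ≤ n) : (∑ j ∈ Finset.range (n+1), rQ l q n j) =
    (∑ j ∈ Finset.range n, rQ l q (q n) j) + n := by
  rw [Finset.sum_range_succ, rQ_self, add_zero,
    Finset.sum_congr rfl (fun j hj => rQ_left hu hn (Finset.mem_range.1 hj)), Finset.sum_add_distrib]
  simp

lemma row_le (hu : UQ l q) {n : ℕ} (hn : l ≤ n) : ∀ i, i < n →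
    (∑ j ∈ Finset.range n, rQ l q i j) ≤ MQ l n := by
  induction n, hn using Nat.le_induction with
  | base => intro i hi; rw [row_base hu hi]
  | succ n hn ih =>
    intro i hi
    have hq := hu.h3 n hn
    have e : MQ l (n+1) = MQ l n + n := by unfold MQ; push_cast; ring
    rw [e]
    by_cases h : i = n
    · subst h
      rw [row_last hu hn]
      linarith [ih _ hq]
    · rw [Finset.sum_range_succ, rQ_right hu hn (by omega)]
      linarith [ih i (by omega), rQ_le hu n hn i (q n) (by omega) hq]

lemma tot_succ (hu : UQ l q) {n : ℕ} (hn : l ≤ n) :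
    (∑ i ∈ Finset.range (n+1), ∑ j ∈ Finset.range (n+1), rQ l q i j) =
    (∑ i ∈ Finset.range n, ∑ j ∈ Finset.range n, rQ l q i j) +
      2 * ((∑ j ∈ Finset.range n, rQ l q (q n) j) + n) := by
  rw [Finset.sum_range_succ, row_last hu hn]
  simp only [Finset.sum_range_succ _ n]
  rw [Finset.sum_add_distrib]
  have : ∑ i ∈ Finset.range n, rQ l q i n = (∑ j ∈ Finset.range n, rQ l q (q n) j) + n := by
    rw [← row_last hu hn, Finset.sum_range_succ, rQ_self, add_zero]
    exact Finset.sum_congr rfl fun j _ => rQ_symm hu j n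
  rw [this]; ring

noncomputable def KQ (l n : ℕ) : ℝ :=
  (l : ℝ)^3/2 - (4*(n : ℝ)+3)*(l : ℝ)^2/6 + (n : ℝ)*(2*(n : ℝ)^2+3*(n : ℝ)-1)/6
    - ((n:ℝ) - l) * (n - l + 1) / 2

lemma KQ_succ (n : ℕ) : KQ l (n+1) = KQ l n + 2 * (MQ l n + n) := by
  unfold KQ MQ; push_cast; ring

lemma tot_base (hu : UQ l q) :
    (∑ i ∈ Finset.range l, ∑ j ∈ Finset.range l, rQ l q i j) = KQ l l := by
  rw [Finset.sum_congr rfl fun i hi => row_base hu (Finset.mem_range.1 hi)]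
  unfold KQ MQ
  simp
  ring

lemma tot_le (hu : UQ l q) {n : ℕ} (hn : l ≤ n) :
    (∑ i ∈ Finset.range n, ∑ j ∈ Finset.range n, rQ l q i j) ≤ KQ l n := by
  induction n, hn using Nat.le_induction with
  | base => rw [tot_base hu]
  | succ n hn ih =>
    rw [tot_succ hu hn, KQ_succ]
    linarith [row_le hu hn _ (hu.h3 n hn)]

lemma tot_eq (hu : UQ l q) {n : ℕ} (hn : l ≤ n) (hc : ∀ i, l < i → i < n → q i + 1 = i) :
    (∑ i ∈ Finset.range n, ∑ j ∈ Finset.range n, rQ l q i j) = KQ l n ∧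
    ∀ i, i < n → (l = n ∨ i + 1 = n) → (∑ j ∈ Finset.range n, rQ l q i j) = MQ l n := by
  induction n, hn using Nat.le_induction with
  | base => exact ⟨tot_base hu, fun i hi _ => row_base hu hi⟩
  | succ n hn ih =>
    obtain ⟨i1, i2⟩ := ih (fun i h1 h2 => hc i h1 (by omega))
    have hq := hu.h3 n hn
    have hr : (∑ j ∈ Finset.range n, rQ l q (q n) j) = MQ l n := by
      apply i2 _ hq
      by_cases h : l = n
      · exact Or.inl h
      · exact Or.inr (hc n (by omega) (by omega))
    constructor
    · rw [tot_succ hu hn, KQ_succ, hr, i1]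
    · intro i _ h
      have : i = n := by omega
      subst this
      rw [row_last hu hn, hr]
      unfold MQ; push_cast; ring

end

/-! enumeration -/
lemma exists_enum [Fintype V] (G : SimpleGraph V) (l : ℕ) [NeZero l] (hconn : G.Connected)
    (hl : 3 ≤ l) (c : Fin l → V) (hinj : Function.Injective c)
    (hadj : ∀ i : Fin l, G.Adj (c i) (c (i + 1))) (k : ℕ) (hk : l ≤ k) :
    k ≤ Fintype.card V → ∃ (e : ℕ → V) (q : ℕ → ℕ), UQ l q ∧
      (∀ i (hi : i < l), e i = c ⟨i, hi⟩) ∧ (∀ i j, i < k → j < k → e i = e j → i = j) ∧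
      ∀ i, i < k → G.Adj (e i) (e (q i)) := by
  induction k, hk using Nat.le_induction with
  | base =>
    intro _
    refine ⟨fun i => if h : i < l then c ⟨i, h⟩ else c 0, fun i => if i + 1 < l then i + 1 else 0,
      ⟨hl, ?_, ?_, ?_⟩, ?_, ?_, ?_⟩
    · intro i hi; simp [hi]
    · intro i hi; simp [hi]
    · intro i hi
      rw [if_neg (by omega)]; omega
    · intro i hi; simp [hi]
    · intro i j hi hj h
      simp only [hi, hj, dif_pos] at h
      have := hinj h
      simpa using this
    · intro i hi
      have h1 := hadj ⟨i, hi⟩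
      have h2 : (⟨i, hi⟩ + 1 : Fin l) = ⟨if i + 1 < l then i + 1 else 0, by split_ifs <;> omega⟩ := by
        apply Fin.ext
        rw [Fin.val_add]
        have : ((1 : Fin l) : ℕ) = 1 := by
          rw [Fin.val_one']; exact Nat.mod_eq_of_lt (by omega)
        rw [this]
        simp only
        split_ifs with h
        · exact Nat.mod_eq_of_lt h
        · have : i + 1 = l := by omega
          rw [this]; exact Nat.mod_self l
      rw [h2] at h1
      have h3 : (if i + 1 < l then i + 1 else 0) < l := by split_ifs <;> omega
      simp only [hi, dif_pos, h3]
      exact h1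
  | succ k hk ih =>
    intro hkn
    obtain ⟨e, q, hu, h1, h2, h3⟩ := ih (by omega)
    let S : Finset V := (Finset.range k).image e
    have hS : ∃ w, w ∉ S := by
      by_contra hcon
      push Not at hcon
      have : Finset.univ ⊆ S := fun w _ => hcon w
      have h4 := Finset.card_le_card this
      have h5 : S.card ≤ k := le_trans Finset.card_image_le (by simp)
      rw [Finset.card_univ] at h4
      omega
    obtain ⟨w, hw⟩ := hS
    have h0 : e 0 ∈ S := Finset.mem_image.2 ⟨0, Finset.mem_range.2 (by omega), rfl⟩
    obtain ⟨pw⟩ := hconn.preconnected (e 0) w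
    obtain ⟨d, -, hd1, hd2⟩ := pw.exists_boundary_dart (S : Set V) h0 hw
    have hd1' : d.fst ∈ S := hd1
    have hd2' : d.snd ∉ S := hd2
    obtain ⟨m, hm, hme⟩ := Finset.mem_image.1 hd1'
    rw [Finset.mem_range] at hm
    have hnew : ∀ i, i < k → e i ≠ d.snd := fun i hi h =>
      hd2' (Finset.mem_image.2 ⟨i, Finset.mem_range.2 hi, h⟩)
    refine ⟨fun i => if i = k then d.snd else e i, fun i => if i = k then m else q i,
      ⟨hl, ?_, ?_, ?_⟩, ?_, ?_, ?_⟩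
    · intro i hi
      rw [if_neg (by omega)]; exact hu.h1 i hi
    · intro i hi
      rw [if_neg (by omega)]; exact hu.h2 i hi
    · intro i hi
      split_ifs with h
      · omega
      · exact hu.h3 i hi
    · intro i hi
      dsimp only
      rw [if_neg (by omega)]; exact h1 i hi
    · intro i j hi hj
      dsimp only
      split_ifs with a b b
      · intro _; omega
      · intro h; exact absurd h.symm (hnew j (by omega))
      · intro h; exact absurd h (hnew i (by omega))
      · exact h2 i j (by omega) (by omega)
    · intro i hi
      dsimp only
      by_cases h : i = k
      · rw [if_pos h, if_pos h, if_neg (by omega), hme]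
        exact d.adj.symm
      · rw [if_neg h, if_neg h, if_neg]
        · exact h3 i (by omega)
        · have := q_lt hu hk (by omega : i < k)
          omega

lemma q_q_ne {l : ℕ} {q : ℕ → ℕ} (hu : UQ l q) (i : ℕ) : q (q i) ≠ i := by
  have hl := hu.hl
  by_cases h : l ≤ i
  · have h3 := hu.h3 i h
    have := q_lt hu h h3
    omega
  · have h4 : i < l := by omega
    have h5 := q_lt hu le_rfl h4
    have h6 := q_cases hu h4
    have h7 := q_cases hu h5
    omega

lemma adj_iff [Fintype V] (G : SimpleGraph V) (n l : ℕ) (huni : esize G = n) {e : ℕ → V} {q : ℕ → ℕ}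
    (hu : UQ l q) (hn : l ≤ n) (h2 : ∀ i j, i < n → j < n → e i = e j → i = j)
    (h3 : ∀ i, i < n → G.Adj (e i) (e (q i))) {i j : ℕ} (hi : i < n) (hj : j < n) :
    G.Adj (e i) (e j) ↔ AQ q i j := by
  constructor
  · intro h
    let Φ : Fin n → G.edgeSet := fun i => ⟨s(e i, e (q i)), h3 i i.2⟩
    have hΦ : Function.Injective Φ := by
      intro a b hab
      have h4 : s(e a, e (q a)) = s(e b, e (q b)) := congrArg Subtype.val hab
      rw [Sym2.eq_iff] at h4
      rcases h4 with ⟨h5, _⟩ | ⟨h5, h6⟩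
      · exact Fin.ext (h2 _ _ a.2 b.2 h5)
      · have h7 := h2 _ _ a.2 (q_lt hu hn b.2) h5
        have h8 := h2 _ _ (q_lt hu hn a.2) b.2 h6
        exfalso
        apply q_q_ne hu b
        rw [← h7, h8]
    have hbij : Function.Bijective Φ := by
      rw [Fintype.bijective_iff_injective_and_card]
      refine ⟨hΦ, ?_⟩
      rw [Fintype.card_fin, ← Nat.card_eq_fintype_card]
      exact huni.symm
    obtain ⟨a, ha⟩ := hbij.2 ⟨s(e i, e j), h⟩
    have h4 : s(e a, e (q a)) = s(e i, e j) := congrArg Subtype.val ha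
    rw [Sym2.eq_iff] at h4
    rcases h4 with ⟨h5, h6⟩ | ⟨h5, h6⟩
    · have h7 := h2 _ _ a.2 hi h5
      have h8 := h2 _ _ (q_lt hu hn a.2) hj h6
      left; rw [← h7, h8]
    · have h7 := h2 _ _ a.2 hj h5
      have h8 := h2 _ _ (q_lt hu hn a.2) hi h6
      right; rw [← h7, h8]
  · rintro (h | h)
    · rw [← h]; exact h3 i hi
    · rw [← h]; exact (h3 j hj).symm

lemma chain_iso [Fintype V] (G : SimpleGraph V) (n l : ℕ) (hcard : Fintype.card V = n)
    {e : ℕ → V} {q : ℕ → ℕ}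
    (hu : UQ l q) (hn : l ≤ n) (h2 : ∀ i j, i < n → j < n → e i = e j → i = j)
    (hA : ∀ i j, i < n → j < n → (G.Adj (e i) (e j) ↔ AQ q i j))
    (hc : ∀ i, l < i → i < n → q i + 1 = i) : Nonempty (lollipop n l ≃g G) := by
  have hl := hu.hl
  have ha := hu.h3 l le_rfl
  set a := q l with hqa
  let σ : ℕ → ℕ := fun i => if i < l then (if i + a < l then i + a else i + a - l) else i
  let q0 : ℕ → ℕ := fun i => if i + 1 < l then i + 1 else if i ≤ l then 0 else i - 1
  have hσn : ∀ i, i < n → σ i < n := by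
    intro i hi; simp only [σ]; split_ifs <;> omega
  have hσi : ∀ i j, σ i = σ j → i = j := by
    intro i j h; simp only [σ] at h; split_ifs at h <;> omega
  have hσq : ∀ i, i < n → q (σ i) = σ (q0 i) := by
    intro i hi
    by_cases h : i < l
    · have h4 : σ i < l := by simp only [σ]; split_ifs <;> omega
      have h5 := q_cases hu h4
      simp only [σ, q0] at *
      split_ifs at * <;> omega
    · by_cases h' : i = l
      · have e1 : σ i = l := by simp only [σ]; split_ifs <;> omega
        rw [e1, ← hqa]
        simp only [σ, q0]
        split_ifs <;> omega
      · have e1 : σ i = i := by simp only [σ]; split_ifs; rfl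
        rw [e1]
        have := hc i (by omega) hi
        simp only [σ, q0]
        split_ifs <;> omega
  have hinj : Function.Injective (fun i : Fin n => e (σ i)) := by
    intro i j h
    exact Fin.ext (hσi _ _ (h2 _ _ (hσn _ i.2) (hσn _ j.2) h))
  have hbij : Function.Bijective (fun i : Fin n => e (σ i)) := by
    rw [Fintype.bijective_iff_injective_and_card]
    exact ⟨hinj, by rw [Fintype.card_fin, hcard]⟩
  refine ⟨⟨Equiv.ofBijective _ hbij, ?_⟩⟩
  intro i j
  rw [Equiv.ofBijective_apply, Equiv.ofBijective_apply, hA _ _ (hσn _ i.2) (hσn _ j.2)]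
  have hi := i.2
  have hj := j.2
  unfold AQ
  rw [hσq i hi, hσq j hj]
  have e1 : ∀ a b, σ a = σ b ↔ a = b := fun a b => ⟨hσi a b, fun h => by rw [h]⟩
  rw [e1, e1]
  simp only [lollipop, SimpleGraph.fromRel_adj, ne_eq, Fin.ext_iff, q0]
  split_ifs <;> omega

def LR (l a b : ℕ) : Prop := a ≠ b ∧
  (((a + 1 = b ∧ b < l) ∨ (a = 0 ∧ b = l - 1) ∨ (a = 0 ∧ b = l) ∨ (l ≤ a ∧ a + 1 = b)) ∨
   ((b + 1 = a ∧ a < l) ∨ (b = 0 ∧ a = l - 1) ∨ (b = 0 ∧ a = l) ∨ (l ≤ b ∧ b + 1 = a)))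

lemma LR_adj {n l : ℕ} (a b : Fin n) (h : LR l a.val b.val) : (lollipop n l).Adj a b := by
  rw [lollipop, SimpleGraph.fromRel_adj]
  exact ⟨fun hh => h.1 (congrArg Fin.val hh), h.2⟩

lemma iso_chain [Fintype V] (G : SimpleGraph V) (n l : ℕ) (hcard : Fintype.card V = n)
    {e : ℕ → V} {q : ℕ → ℕ}
    (hu : UQ l q) (hn : l ≤ n) (h2 : ∀ i j, i < n → j < n → e i = e j → i = j)
    (hsurj : ∀ v, ∃ i, i < n ∧ e i = v)
    (hA : ∀ i j, i < n → j < n → (G.Adj (e i) (e j) ↔ AQ q i j))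
    (φ : lollipop n l ≃g G) : ∀ i, l < i → i < n → q i + 1 = i := by
  have hl := hu.hl
  by_cases hnl : n = l
  · intro i h1 h2; omega
  have hnl' : l < n := by omega
  -- two distinct neighbours in the lollipop
  have key : ∀ a : Fin n, a.val + 1 ≠ n → ∃ b d : Fin n, b ≠ d ∧ (lollipop n l).Adj a b ∧ (lollipop n l).Adj a d := by
    intro a ha
    have ha' := a.2
    have hlol : ∀ (b d : ℕ) (hb : b < n) (hd : d < n), b ≠ d →
        LR l a.val b → LR l a.val d →
        ∃ b d : Fin n, b ≠ d ∧ (lollipop n l).Adj a b ∧ (lollipop n l).Adj a d := by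
      intro b d hb hd hbd h1 h2
      exact ⟨⟨b, hb⟩, ⟨d, hd⟩, by simpa using hbd, LR_adj a ⟨b, hb⟩ h1, LR_adj a ⟨d, hd⟩ h2⟩
    by_cases c1 : a.val = 0
    · refine hlol 1 (l-1) (by omega) (by omega) (by omega) ?_ ?_ <;>
        (unfold LR; omega)
    by_cases c2 : a.val + 1 < l
    · refine hlol (a.val - 1) (a.val + 1) (by omega) (by omega) (by omega) ?_ ?_ <;>
        (unfold LR; omega)
    by_cases c3 : a.val + 1 = l
    · refine hlol (a.val - 1) 0 (by omega) (by omega) (by omega) ?_ ?_ <;>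
        (unfold LR; omega)
    by_cases c4 : a.val = l
    · refine hlol 0 (a.val + 1) (by omega) (by omega) (by omega) ?_ ?_ <;>
        (unfold LR; omega)
    · refine hlol (a.val - 1) (a.val + 1) (by omega) (by omega) (by omega) ?_ ?_ <;>
        (unfold LR; omega)
  have leaf : ∀ i, i < n → (∀ j, j < n → q j ≠ i) → e i = φ ⟨n-1, by omega⟩ := by
    intro i hi hch
    by_contra hne
    have ha : (φ.symm (e i)).val + 1 ≠ n := by
      intro h
      apply hne
      have : φ.symm (e i) = ⟨n-1, by omega⟩ := Fin.ext (by simp only; omega)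
      rw [← this]; simp
    obtain ⟨b, d, hbd, hb, hd⟩ := key _ ha
    have nb : ∀ b, (lollipop n l).Adj (φ.symm (e i)) b → φ b = e (q i) := by
      intro b hb
      have h5 : G.Adj (e i) (φ b) := by
        have := φ.map_adj_iff.2 hb
        simpa using this
      obtain ⟨j, hj, hje⟩ := hsurj (φ b)
      rw [← hje, hA _ _ hi hj] at h5
      rcases h5 with h6 | h6
      · rw [← hje, h6]
      · exact absurd h6 (hch j hj)
    apply hbd
    apply φ.injective
    rw [nb b hb, nb d hd]
  have lastleaf : ∀ j, j < n → q j ≠ n - 1 := by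
    intro j hj h
    by_cases hjl : l ≤ j
    · have := hu.h3 j hjl; omega
    · have := q_lt hu le_rfl (by omega : j < l); omega
  have child : ∀ i, i + 1 < n → ∃ j, j < n ∧ q j = i := by
    intro i hi
    by_contra hcon
    push Not at hcon
    have e1 := leaf i (by omega) hcon
    have e2 := leaf (n-1) (by omega) lastleaf
    have := h2 _ _ (by omega) (by omega) (e1.trans e2.symm)
    omega
  have main : ∀ k i, l < i → i < n → n ≤ i + k → q i + 1 = i := by
    intro k
    induction k with
    | zero => intro i h1 h2 h3; omega
    | succ k ih =>
      intro i h1 h2 h3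
      obtain ⟨j, hj, hji⟩ := child (i-1) (by omega)
      have hjl : l ≤ j := by
        by_contra hcon
        have := q_lt hu le_rfl (by omega : j < l); omega
      have h5 := hu.h3 j hjl
      by_cases hjeq : j = i
      · subst hjeq; omega
      · have := ih j (by omega) hj (by omega)
        omega
  intro i h1 h2
  exact main n i h1 h2 (by omega)

/-- For an `n`-vertex unicyclic graph `G` with cycle length `l`
and any `x ∈ V(G)`, `CC(x) ≤ l³/2 − (4n+3)l²/6 + n(2n²+3n−1)/6`, with
equality iff `G ≅ P_n^l` and `x` lies on the cycle. -/
theorem coverCost_upper [Fintype V] (G : SimpleGraph V) (n l : ℕ) [NeZero l]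
    (hn : Fintype.card V = n) (hconn : G.Connected) (huni : esize G = n)
    (hl : 3 ≤ l) (c : Fin l → V) (hinj : Function.Injective c)
    (hadj : ∀ i : Fin l, G.Adj (c i) (c (i + 1))) (x : V) :
    coverCost G x ≤ (l : ℝ)^3/2 - (4*(n : ℝ)+3)*(l : ℝ)^2/6
        + (n : ℝ)*(2*(n : ℝ)^2+3*(n : ℝ)-1)/6 ∧
    (coverCost G x = (l : ℝ)^3/2 - (4*(n : ℝ)+3)*(l : ℝ)^2/6
        + (n : ℝ)*(2*(n : ℝ)^2+3*(n : ℝ)-1)/6 ↔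
      Nonempty (lollipop n l ≃g G) ∧ ∃ i : Fin l, c i = x) := by
  obtain ⟨e, q, hu, he, h2, h3⟩ := exists_enum G l hconn hl c hinj hadj n
    (by
      have := Fintype.card_le_of_injective c hinj
      rw [Fintype.card_fin, hn] at this; exact this) hn.ge
  have hln : l ≤ n := by
    have := Fintype.card_le_of_injective c hinj
    rw [Fintype.card_fin, hn] at this; exact this
  have hA : ∀ i j, i < n → j < n → (G.Adj (e i) (e j) ↔ AQ q i j) :=
    fun i j hi hj => adj_iff G n l huni hu hln h2 h3 hi hj
  have hbij : Function.Bijective (fun i : Fin n => e i) := by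
    rw [Fintype.bijective_iff_injective_and_card]
    exact ⟨fun i j h => Fin.ext (h2 _ _ i.2 j.2 h), by rw [Fintype.card_fin, hn]⟩
  have hsurj : ∀ v, ∃ i, i < n ∧ e i = v := by
    intro v
    obtain ⟨i, hi⟩ := hbij.2 v
    exact ⟨i, i.2, hi⟩
  have hsum : ∀ g : V → ℝ, ∑ v, g v = ∑ i ∈ Finset.range n, g (e i) := by
    intro g
    rw [Finset.sum_range]
    exact (Equiv.sum_comp (Equiv.ofBijective _ hbij) g).symm
  have hdeg : ∀ i, i < n → degR G (e i) = degQ q n i := by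
    intro i hi
    rw [degR_eq, hsum]
    unfold degQ
    refine Finset.sum_congr rfl fun j hj => ?_
    simp only [hA i j hi (Finset.mem_range.1 hj)]
  have hpos : ∀ u, 0 < degR G u := by
    intro u
    obtain ⟨i, hi, rfl⟩ := hsurj u
    unfold degR
    rw [Nat.cast_pos, Finset.card_pos]
    exact ⟨e (q i), by simpa using h3 i hi⟩
  choose ix hix hex using hsurj
  have hixe : ∀ i, i < n → ix (e i) = i := fun i hi => h2 _ _ (hix _) hi (hex _)
  have hhit : ∀ i j, i < n → j < n → hitting G (e i) (e j) = HQ l q n i j := by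
    intro i j hi hj
    rw [hitting_eq G (e j) (fun v => HQ l q n (ix v) j) _ hpos]
    · simp only [hixe i hi]
    · intro u huj
      have hne : ix u ≠ j := by
        intro h; apply huj; rw [← hex u, h]
      conv_rhs => rw [← hex u]
      rw [hdeg _ (hix u), ← lap_H hu hln (hix u) hj hne, hsum]
      unfold lapQ
      refine Finset.sum_congr rfl fun v hv => ?_
      have hv' := Finset.mem_range.1 hv
      have := hA (ix u) v (hix u) hv'
      rw [hex u] at this
      simp only [this, hixe v hv']
    · simp only [hixe j hj, HQ_self]
  have hCC : coverCost G x = (∑ y ∈ Finset.range n, ∑ z ∈ Finset.range n, rQ l q y z)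
    + (∑ y ∈ Finset.range n, (hQ l q y : ℝ)) - n * hQ l q (ix x) := by
    rw [← sum_H]
    unfold coverCost
    rw [hsum]
    refine Finset.sum_congr rfl fun j hj => ?_
    conv_lhs => rw [← hex x]
    exact hhit _ _ (hix x) (Finset.mem_range.1 hj)
  have hxc : (∃ i : Fin l, c i = x) ↔ ix x < l := by
    constructor
    · rintro ⟨i, rfl⟩
      have := hixe i (by omega)
      rw [he i i.2] at this
      simp only [Fin.eta] at this
      rw [this]; exact i.2
    · intro h
      refine ⟨⟨ix x, h⟩, ?_⟩
      rw [← he, hex]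
  have hn0 : (0:ℝ) < n := by
    have : 0 < n := by omega
    exact_mod_cast this
  have hB : (l : ℝ)^3/2 - (4*(n : ℝ)+3)*(l : ℝ)^2/6 + (n : ℝ)*(2*(n : ℝ)^2+3*(n : ℝ)-1)/6
      = KQ l n + ((n:ℝ) - l) * (n - l + 1) / 2 := by
    unfold KQ; ring
  have b1 := tot_le hu hln
  have b2 := sum_h_le hu hln
  have b3 : (0:ℝ) ≤ n * hQ l q (ix x) := by positivity
  rw [hB, hCC, hxc]
  refine ⟨by linarith [b2.1], ?_, ?_⟩
  · intro h
    have hc := b2.2.1 (by linarith [b2.1])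
    refine ⟨chain_iso G n l hn hu hln h2 hA hc, ?_⟩
    have h0 : (n:ℝ) * hQ l q (ix x) = 0 := by linarith [b2.1]
    rcases mul_eq_zero.1 h0 with h0 | h0
    · linarith
    · have h0' : hQ l q (ix x) = 0 := by exact_mod_cast h0
      by_contra hcon
      rw [hQ_ge hu (by omega)] at h0'
      omega
  · rintro ⟨⟨φ⟩, hx⟩
    have hc := iso_chain G n l hn hu hln h2 (fun v => ⟨ix v, hix v, hex v⟩) hA φ
    rw [(tot_eq hu hln hc).1, b2.2.2 hc, hQ_lt hx]
    simp
end
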